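/- arXiv:0909.2811 — 2 statements merged into one kernel-verified Lean document; each statement's English description precedes it below -/
import Mathlib

section
/- The number S₂(H) of pairs (x₁, x₂) of positive integers with x₁, x₂ ≤ H such that x₁·x₂ is a perfect square satisfies S₂(H) = ζ(2)^{-1} H log H + O(H) as H → ∞. -/
open scoped Classical

open Filter

lemma sqf_eq {s t m : ℕ} (hs : Squarefree s) (ht : Squarefree t) (h : s * t = m ^ 2) : s = t := by
  have h1 : s ∣ m := (hs.dvd_pow_iff_dvd two_ne_zero).1 ⟨t, h.symm⟩
  obtain ⟨k, rfl⟩ := h1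
  have hs0 : 0 < s := Nat.pos_of_ne_zero hs.ne_zero
  have h2 : t = s * (k * k) := by
    apply Nat.eq_of_mul_eq_mul_left hs0
    rw [h]; ring
  have h3 : k = 1 := by
    have := ht k ⟨s, by rw [h2]; ring⟩
    exact Nat.isUnit_iff.1 this
  rw [h2, h3]; simp

lemma mem_cond {N s a : ℕ} (hs : 0 < s) : a ≤ Nat.sqrt (N / s) ↔ s * a ^ 2 ≤ N := by
  rw [Nat.le_sqrt, Nat.le_div_iff_mul_le hs]
  constructor <;> intro h <;> nlinarith

lemma count_eq (N : ℕ) :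
    ((Finset.Icc 1 N ×ˢ Finset.Icc 1 N).filter
            (fun p : ℕ × ℕ => ∃ m : ℕ, 0 < m ∧ p.1 * p.2 = m ^ 2)).card
      = ∑ s ∈ (Finset.Icc 1 N).filter Squarefree, (Nat.sqrt (N / s)) ^ 2 := by
  have h0 : ∑ s ∈ (Finset.Icc 1 N).filter Squarefree, (Nat.sqrt (N / s)) ^ 2 =
    (((Finset.Icc 1 N).filter Squarefree).sigma
      (fun s => Finset.Icc 1 (Nat.sqrt (N / s)) ×ˢ Finset.Icc 1 (Nat.sqrt (N / s)))).card := by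
    rw [Finset.card_sigma]
    refine Finset.sum_congr rfl fun s _ => ?_
    simp [sq]
  rw [h0]
  symm
  refine Finset.card_bij (fun x _ => (x.1 * x.2.1 ^ 2, x.1 * x.2.2 ^ 2)) ?_ ?_ ?_
  · rintro ⟨s, a, b⟩ h
    simp only [Finset.mem_sigma, Finset.mem_filter, Finset.mem_Icc, Finset.mem_product] at h ⊢
    obtain ⟨⟨⟨hs1, hs2⟩, hs⟩, ⟨ha, ha'⟩, hb, hb'⟩ := h
    rw [mem_cond hs1] at ha' hb'
    refine ⟨⟨⟨Nat.succ_le_of_lt (by positivity), ha'⟩, Nat.succ_le_of_lt (by positivity), hb'⟩,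
      s * a * b, by positivity, by ring⟩
  · rintro ⟨s, a, b⟩ h ⟨t, c, d⟩ h' he
    simp only [Finset.mem_sigma, Finset.mem_filter, Finset.mem_Icc, Finset.mem_product] at h h'
    obtain ⟨⟨⟨hs1, hs2⟩, hs⟩, ⟨ha, ha'⟩, hb, hb'⟩ := h
    obtain ⟨⟨⟨ht1, ht2⟩, ht⟩, ⟨hc, hc'⟩, hd, hd'⟩ := h'
    simp only [Prod.mk.injEq] at he
    obtain ⟨e1, e2⟩ := he
    have hst : s = t := by
      have h1 : c ^ 2 ∣ (s * a) ^ 2 := ⟨s * t, by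
        calc (s * a) ^ 2 = s * (s * a ^ 2) := by ring
          _ = s * (t * c ^ 2) := by rw [e1]
          _ = _ := by ring⟩
      obtain ⟨m, hm⟩ := (Nat.pow_dvd_pow_iff two_ne_zero).1 h1
      apply sqf_eq (m := m) hs ht
      have hc2 : 0 < c ^ 2 := by positivity
      apply Nat.eq_of_mul_eq_mul_left hc2
      calc c ^ 2 * (s * t) = s * (t * c ^ 2) := by ring
        _ = s * (s * a ^ 2) := by rw [e1]
        _ = (s * a) ^ 2 := by ring
        _ = (c * m) ^ 2 := by rw [hm]
        _ = _ := by ring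
    subst hst
    have e1' := Nat.eq_of_mul_eq_mul_left hs1 e1
    have e2' := Nat.eq_of_mul_eq_mul_left hs1 e2
    have := Nat.pow_left_injective two_ne_zero e1'
    have := Nat.pow_left_injective two_ne_zero e2'
    simp_all
  · rintro ⟨x, y⟩ h
    simp only [Finset.mem_filter, Finset.mem_Icc, Finset.mem_product] at h
    obtain ⟨⟨⟨hx1, hx2⟩, hy1, hy2⟩, m, hm, he⟩ := h
    obtain ⟨s, a, hs0, ha0, hsa, hs⟩ := Nat.sq_mul_squarefree_of_pos hx1
    obtain ⟨t, b, ht0, hb0, htb, ht⟩ := Nat.sq_mul_squarefree_of_pos hy1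
    have hst : s = t := by
      have h1 : (a * b) ^ 2 ∣ m ^ 2 := ⟨s * t, by rw [← he, ← hsa, ← htb]; ring⟩
      obtain ⟨k, hk⟩ := (Nat.pow_dvd_pow_iff two_ne_zero).1 h1
      apply sqf_eq (m := k) hs ht
      have hc2 : 0 < (a * b) ^ 2 := by positivity
      apply Nat.eq_of_mul_eq_mul_left hc2
      calc (a * b) ^ 2 * (s * t) = (a ^ 2 * s) * (b ^ 2 * t) := by ring
        _ = m ^ 2 := by rw [hsa, htb, he]
        _ = _ := by rw [hk]; ring
    subst hst
    refine ⟨⟨s, a, b⟩, ?_, ?_⟩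
    · simp only [Finset.mem_sigma, Finset.mem_filter, Finset.mem_Icc, Finset.mem_product]
      rw [mem_cond hs0, mem_cond hs0]
      refine ⟨⟨⟨hs0, ?_⟩, hs⟩, ⟨ha0, ?_⟩, hb0, ?_⟩
      · exact (Nat.le_of_dvd hx1 ⟨a ^ 2, by rw [← hsa]; ring⟩).trans hx2
      · linarith [hsa, mul_comm s (a ^ 2)]
      · linarith [htb, mul_comm s (b ^ 2)]
    · simp only [Prod.mk.injEq]
      constructor
      · rw [← hsa]; ring
      · rw [← htb]; ring

lemma sum_inv_sqrt (N : ℕ) : ∑ s ∈ Finset.Icc 1 N, 1 / √(s : ℝ) ≤ 2 * √(N : ℝ) := by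
  induction N with
  | zero => simp
  | succ n ih =>
    rw [Finset.sum_Icc_succ_top (by omega)]
    have h1 : 0 < √((n + 1 : ℕ) : ℝ) := Real.sqrt_pos.2 (by positivity)
    have h2 : 0 ≤ √(n : ℝ) := Real.sqrt_nonneg _
    have h3 : √((n + 1 : ℕ) : ℝ) ^ 2 = n + 1 := by rw [Real.sq_sqrt (by positivity)]; push_cast; ring
    have h4 : √(n : ℝ) ^ 2 = n := Real.sq_sqrt (by positivity)
    have : 1 / √((n + 1 : ℕ) : ℝ) ≤ 2 * √((n + 1 : ℕ) : ℝ) - 2 * √(n : ℝ) := by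
      rw [div_le_iff₀ h1]
      nlinarith [sq_nonneg (√((n + 1 : ℕ) : ℝ) - √(n : ℝ))]
    linarith

lemma sqrt_err {N s : ℕ} (hs : 0 < s) (hsN : s ≤ N) :
    |((Nat.sqrt (N / s) ^ 2 : ℕ) : ℝ) - N * (1 / s)| ≤ 3 * √(N : ℝ) * (1 / √(s : ℝ)) := by
  have hs' : (0 : ℝ) < s := by exact_mod_cast hs
  set r := Nat.sqrt (N / s) with hr
  have h1 : s * r ^ 2 ≤ N := (mem_cond hs).1 le_rfl
  have h2 : N < s * (r + 1) ^ 2 := by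
    by_contra! h
    have := (mem_cond hs).2 h
    omega
  have hr1 : 1 ≤ r := (mem_cond hs).2 (by simpa using hsN)
  have h1' : (s : ℝ) * r ^ 2 ≤ N := by exact_mod_cast h1
  have h2' : (N : ℝ) < s * (r + 1) ^ 2 := by exact_mod_cast h2
  have hr1' : (1 : ℝ) ≤ r := by exact_mod_cast hr1
  have e : 3 * √(N : ℝ) * (1 / √(s : ℝ)) = 3 * √((N : ℝ) / s) := by
    rw [Real.sqrt_div (by positivity)]; ring
  have h3 : (r : ℝ) ≤ √((N : ℝ) / s) := by
    apply Real.le_sqrt_of_sq_le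
    rw [le_div_iff₀ hs']; linarith
  have h4 : (N : ℝ) * (1 / s) < (r + 1) ^ 2 := by
    rw [mul_one_div, div_lt_iff₀ hs']; linarith
  have h5 : (r : ℝ) ^ 2 ≤ N * (1 / s) := by
    rw [mul_one_div, le_div_iff₀ hs']; linarith
  rw [e, abs_le]
  push_cast
  constructor <;> nlinarith

lemma count_err (N : ℕ) :
    |((∑ s ∈ (Finset.Icc 1 N).filter Squarefree, (Nat.sqrt (N / s)) ^ 2 : ℕ) : ℝ)
      - N * ∑ s ∈ (Finset.Icc 1 N).filter Squarefree, 1 / (s : ℝ)| ≤ 6 * N := by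
  rw [Nat.cast_sum, Finset.mul_sum, ← Finset.sum_sub_distrib]
  calc _ ≤ ∑ s ∈ (Finset.Icc 1 N).filter Squarefree, 3 * √(N : ℝ) * (1 / √(s : ℝ)) := by
        refine (Finset.abs_sum_le_sum_abs _ _).trans (Finset.sum_le_sum fun s hs => ?_)
        simp only [Finset.mem_filter, Finset.mem_Icc] at hs
        exact sqrt_err hs.1.1 hs.1.2
    _ ≤ ∑ s ∈ Finset.Icc 1 N, 3 * √(N : ℝ) * (1 / √(s : ℝ)) :=
        Finset.sum_le_sum_of_subset_of_nonneg (Finset.filter_subset _ _)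
          (fun _ _ _ => by positivity)
    _ = 3 * √(N : ℝ) * ∑ s ∈ Finset.Icc 1 N, (1 / √(s : ℝ)) := by rw [Finset.mul_sum]
    _ ≤ 3 * √(N : ℝ) * (2 * √(N : ℝ)) := by gcongr; exact sum_inv_sqrt N
    _ = 6 * N := by
        have : √(N : ℝ) * √(N : ℝ) = N := Real.mul_self_sqrt (by positivity)
        linear_combination 6 * this
open ArithmeticFunction in
lemma sum_moebius_sq {s N : ℕ} (hs : 0 < s) (hN : s ≤ N) :
    ∑ d ∈ (Finset.Icc 1 N).filter (fun d => d ^ 2 ∣ s), (moebius d : ℝ)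
      = if Squarefree s then 1 else 0 := by
  obtain ⟨t, c, ht0, hc0, rfl, ht⟩ := Nat.sq_mul_squarefree_of_pos hs
  have key : ∀ d, d ^ 2 ∣ c ^ 2 * t ↔ d ∣ c := by
    intro d
    constructor
    · intro h
      have hg : 0 < Nat.gcd d c := Nat.gcd_pos_of_pos_right _ hc0
      obtain ⟨g, d', c', hg0, hco, rfl, rfl⟩ := Nat.exists_coprime' hg
      have h1 : d' ^ 2 ∣ c' ^ 2 * t := by
        have : g ^ 2 * d' ^ 2 ∣ g ^ 2 * (c' ^ 2 * t) := by
          convert h using 1 <;> ring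
        exact Nat.dvd_of_mul_dvd_mul_left (by positivity) this
      have h2 : d' ^ 2 ∣ t := (Nat.Coprime.pow 2 2 hco).dvd_of_dvd_mul_left h1
      have h3 := Nat.isUnit_iff.1 (ht d' (by rwa [← sq]))
      rw [h3]; simp
    · intro h
      exact (pow_dvd_pow_of_dvd h 2).mul_right t
  have hset : (Finset.Icc 1 N).filter (fun d => d ^ 2 ∣ c ^ 2 * t) = c.divisors := by
    ext d
    simp only [Finset.mem_filter, Finset.mem_Icc, Nat.mem_divisors, key]
    constructor
    · rintro ⟨_, h⟩; exact ⟨h, hc0.ne'⟩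
    · rintro ⟨h, _⟩
      refine ⟨⟨Nat.pos_of_dvd_of_pos h hc0, (Nat.le_of_dvd hc0 h).trans (le_trans ?_ hN)⟩, h⟩
      nlinarith [Nat.mul_le_mul hc0 ht0]
  rw [hset]
  have h1 : ∑ d ∈ c.divisors, moebius d = if c = 1 then 1 else 0 := by
    rw [← coe_mul_zeta_apply, moebius_mul_coe_zeta, one_apply]
  have h2 : Squarefree (c ^ 2 * t) ↔ c = 1 := by
    constructor
    · intro h
      exact Nat.isUnit_iff.1 (h c ⟨t, by ring⟩)
    · rintro rfl; simpa using ht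
  simp only [h2]
  rw [← Int.cast_sum, h1]
  split_ifs <;> simp

lemma harm_eq (n : ℕ) : ((harmonic n : ℚ) : ℝ) = ∑ k ∈ Finset.Icc 1 n, 1 / (k : ℝ) := by
  rw [harmonic_eq_sum_Icc]; push_cast; simp

lemma sum_mult (N m : ℕ) (hm : 0 < m) :
    ∑ s ∈ (Finset.Icc 1 N).filter (fun s => m ∣ s), 1 / (s : ℝ)
      = 1 / (m : ℝ) * ((harmonic (N / m) : ℚ) : ℝ) := by
  rw [harm_eq, Finset.mul_sum]
  symm
  refine Finset.sum_bij (fun k _ => m * k) ?_ ?_ ?_ ?_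
  · intro k hk
    simp only [Finset.mem_filter, Finset.mem_Icc] at hk ⊢
    rw [Nat.le_div_iff_mul_le hm] at hk
    exact ⟨⟨Nat.mul_pos hm hk.1, by linarith [mul_comm m k]⟩, dvd_mul_right _ _⟩
  · intro a _ b _ h
    exact Nat.eq_of_mul_eq_mul_left hm h
  · rintro s hs
    simp only [Finset.mem_filter, Finset.mem_Icc] at hs
    obtain ⟨⟨h1, h2⟩, k, rfl⟩ := hs
    refine ⟨k, ?_, rfl⟩
    rw [Finset.mem_Icc, Nat.le_div_iff_mul_le hm]
    exact ⟨Nat.pos_of_mul_pos_left h1, by linarith [mul_comm m k]⟩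
  · intro k _
    push_cast
    rw [one_div_mul_one_div]

open ArithmeticFunction in
lemma T_eq (N : ℕ) :
    ∑ s ∈ (Finset.Icc 1 N).filter Squarefree, 1 / (s : ℝ)
      = ∑ d ∈ Finset.Icc 1 N, (moebius d : ℝ) / (d : ℝ) ^ 2 * ((harmonic (N / d ^ 2) : ℚ) : ℝ) := by
  calc _ = ∑ s ∈ Finset.Icc 1 N, ∑ d ∈ Finset.Icc 1 N,
          (if d ^ 2 ∣ s then (moebius d : ℝ) * (1 / (s : ℝ)) else 0) := by
        rw [Finset.sum_filter]
        refine Finset.sum_congr rfl fun s hs => ?_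
        rw [Finset.mem_Icc] at hs
        rw [← Finset.sum_filter, ← Finset.sum_mul, sum_moebius_sq hs.1 hs.2]
        split_ifs <;> simp
    _ = _ := by
        rw [Finset.sum_comm]
        refine Finset.sum_congr rfl fun d hd => ?_
        rw [Finset.mem_Icc] at hd
        rw [← Finset.sum_filter, ← Finset.mul_sum, sum_mult N (d ^ 2) (by have := hd.1; positivity)]
        push_cast; ring

lemma harm_bound {N d : ℕ} (hN : 0 < N) (hd : 0 < d) :
    |((harmonic (N / d ^ 2) : ℚ) : ℝ) - Real.log N| ≤ 1 + 2 * Real.log d := by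
  have hN' : (0 : ℝ) < N := by exact_mod_cast hN
  have hd' : (1 : ℝ) ≤ d := by exact_mod_cast hd
  have hlogd : 0 ≤ Real.log d := Real.log_nonneg hd'
  by_cases h : d ^ 2 ≤ N
  · have e : N / d ^ 2 = ⌊(N : ℝ) / ((d ^ 2 : ℕ) : ℝ)⌋₊ := by rw [Nat.floor_div_eq_div]
    have el : Real.log ((N : ℝ) / ((d ^ 2 : ℕ) : ℝ)) = Real.log N - 2 * Real.log d := by
      rw [Real.log_div (by positivity) (by positivity)]
      push_cast
      rw [Real.log_pow]; norm_num
    have h1 := log_le_harmonic_floor ((N : ℝ) / ((d ^ 2 : ℕ) : ℝ)) (by positivity)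
    have h2 := harmonic_floor_le_one_add_log ((N : ℝ) / ((d ^ 2 : ℕ) : ℝ)) (by
      rw [le_div_iff₀ (by positivity), one_mul]; exact_mod_cast h)
    rw [← e, el] at h1 h2
    rw [abs_le]; constructor <;> linarith
  · push Not at h
    rw [Nat.div_eq_of_lt h]
    have h1 : 0 ≤ Real.log N := Real.log_nonneg (by exact_mod_cast hN)
    have h2 : Real.log N ≤ 2 * Real.log d := by
      have : Real.log N ≤ Real.log ((d : ℝ) ^ 2) := Real.log_le_log hN' (by exact_mod_cast h.le)
      rw [Real.log_pow] at this; exact_mod_cast this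
    simp only [harmonic_zero, Rat.cast_zero, zero_sub, abs_neg, abs_of_nonneg h1]
    linarith

open ArithmeticFunction in
lemma hasSum_moebius : HasSum (fun d : ℕ => (moebius d : ℝ) / (d : ℝ) ^ 2) (6 / Real.pi ^ 2) := by
  have h2 : 1 < (2 : ℂ).re := by simp
  have hs := (LSeriesSummable_moebius_iff (s := 2)).2 h2
  have hL := LSeries_zeta_mul_Lseries_moebius h2
  rw [LSeries_zeta_eq_riemannZeta h2, riemannZeta_two] at hL
  have hsum := hs.hasSum
  have hval : LSeries (fun n => ((moebius n : ℤ) : ℂ)) 2 = ((6 / Real.pi ^ 2 : ℝ) : ℂ) := by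
    have hpi : (Real.pi : ℂ) ≠ 0 := by exact_mod_cast Real.pi_ne_zero
    push_cast
    field_simp at hL ⊢
    linear_combination hL
  rw [← Complex.hasSum_ofReal, ← hval]
  convert hsum using 1
  funext d
  rcases eq_or_ne d 0 with rfl | hd
  · simp
  · rw [LSeries.term_of_ne_zero hd]
    push_cast
    norm_cast
  rfl

lemma log_bound {d : ℕ} (hd : 0 < d) : 1 + 2 * Real.log d ≤ 4 * √(d : ℝ) := by
  have hd' : (0 : ℝ) < d := by exact_mod_cast hd
  have h := Real.log_le_sub_one_of_pos (Real.sqrt_pos.2 hd')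
  rw [Real.log_sqrt hd'.le] at h
  linarith

lemma T_asymp : ∃ C : ℝ, ∀ N : ℕ, 0 < N →
    |∑ s ∈ (Finset.Icc 1 N).filter Squarefree, 1 / (s : ℝ) - 6 / Real.pi ^ 2 * Real.log N| ≤ C := by
  have hsum : Summable (fun d : ℕ => 4 * (1 / (d : ℝ) ^ (3 / 2 : ℝ))) :=
    (Real.summable_one_div_nat_rpow.2 (by norm_num)).mul_left 4
  refine ⟨∑' d : ℕ, 4 * (1 / (d : ℝ) ^ (3 / 2 : ℝ)), fun N hN => ?_⟩
  rw [T_eq]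
  have h1 : HasSum (fun d : ℕ => (ArithmeticFunction.moebius d : ℝ) / (d : ℝ) ^ 2 *
      ((harmonic (N / d ^ 2) : ℚ) : ℝ)) (∑ d ∈ Finset.Icc 1 N,
      (ArithmeticFunction.moebius d : ℝ) / (d : ℝ) ^ 2 * ((harmonic (N / d ^ 2) : ℚ) : ℝ)) := by
    apply hasSum_sum_of_ne_finset_zero
    intro d hd
    rcases Nat.eq_zero_or_pos d with rfl | hd0
    · simp
    · have : N < d := by
        by_contra! h
        exact hd (Finset.mem_Icc.2 ⟨hd0, h⟩)
      rw [Nat.div_eq_of_lt (by nlinarith)]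
      simp
  have h2 := h1.sub (hasSum_moebius.mul_right (Real.log N))
  rw [← h2.tsum_eq, ← Real.norm_eq_abs]
  refine tsum_of_norm_bounded hsum.hasSum fun d => ?_
  rcases Nat.eq_zero_or_pos d with rfl | hd0
  · simp
  · have hd' : (0 : ℝ) < d := by exact_mod_cast hd0
    rw [← mul_sub, norm_mul, norm_div, Real.norm_eq_abs, Real.norm_eq_abs, Real.norm_eq_abs]
    have hmu : |(ArithmeticFunction.moebius d : ℝ)| ≤ 1 := by
      exact_mod_cast ArithmeticFunction.abs_moebius_le_one (n := d)
    have hb := (harm_bound hN hd0).trans (log_bound hd0)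
    have e : (d : ℝ) ^ 2 = (d : ℝ) ^ (3 / 2 : ℝ) * √(d : ℝ) := by
      rw [Real.sqrt_eq_rpow, ← Real.rpow_add hd', ← Real.rpow_natCast]; norm_num
    calc _ ≤ 1 / |(d : ℝ) ^ 2| * (4 * √(d : ℝ)) := by gcongr
      _ = _ := by
        rw [abs_of_pos (by positivity), e]
        have : √(d : ℝ) ≠ 0 := (Real.sqrt_pos.2 hd').ne'
        have : (d : ℝ) ^ (3 / 2 : ℝ) ≠ 0 := by positivity
        field_simp

theorem pairs_square_asymptotic :
    (fun H : ℝ =>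
        (((Finset.Icc 1 ⌊H⌋₊ ×ˢ Finset.Icc 1 ⌊H⌋₊).filter
            (fun p : ℕ × ℕ => ∃ m : ℕ, 0 < m ∧ p.1 * p.2 = m ^ 2)).card : ℝ)
          - (6 / Real.pi ^ 2) * H * Real.log H)
      =O[atTop] fun H : ℝ => H := by
  obtain ⟨C, hC⟩ := T_asymp
  have hC0 : 0 ≤ C := (abs_nonneg _).trans (hC 1 one_pos)
  refine Asymptotics.IsBigO.of_bound (6 + C + 6 / Real.pi ^ 2 * 2) ?_
  filter_upwards [eventually_ge_atTop (1 : ℝ)] with H hH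
  rw [count_eq]
  set N := ⌊H⌋₊ with hNdef
  have hN : 0 < N := Nat.floor_pos.2 hH
  have hN' : (0 : ℝ) < N := by exact_mod_cast hN
  have hNH : (N : ℝ) ≤ H := Nat.floor_le (by linarith)
  have hHN : H < N + 1 := Nat.lt_floor_add_one H
  have a1 := count_err N
  have a2 := hC N hN
  set A : ℝ := ((∑ s ∈ (Finset.Icc 1 N).filter Squarefree, (Nat.sqrt (N / s)) ^ 2 : ℕ) : ℝ)
  set T : ℝ := ∑ s ∈ (Finset.Icc 1 N).filter Squarefree, 1 / (s : ℝ)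
  set c : ℝ := 6 / Real.pi ^ 2 with hc
  have hc0 : 0 ≤ c := by positivity
  have hH0 : 0 < H := by linarith
  have b1 : |N * (T - c * Real.log N)| ≤ C * H := by
    rw [abs_mul, abs_of_pos hN', mul_comm]
    exact mul_le_mul a2 hNH hN'.le hC0
  have b2 : |H * Real.log H - N * Real.log N| ≤ 2 * H := by
    have l1 : Real.log N ≤ Real.log H := Real.log_le_log hN' hNH
    have l0 : 0 ≤ Real.log H := Real.log_nonneg hH
    have l2 : Real.log H ≤ H - 1 := Real.log_le_sub_one_of_pos hH0
    have l3 : Real.log H - Real.log N ≤ H / N - 1 := by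
      rw [← Real.log_div hH0.ne' hN'.ne']
      exact Real.log_le_sub_one_of_pos (by positivity)
    have l4 : N * (Real.log H - Real.log N) ≤ H - N := by
      calc _ ≤ N * (H / N - 1) := by gcongr
        _ = _ := by field_simp
    have l5 : (H - N) * Real.log H ≤ 1 * Real.log H := by gcongr; linarith
    have l6 : 0 ≤ (H - N) * Real.log H := mul_nonneg (by linarith) l0
    have l7 : 0 ≤ N * (Real.log H - Real.log N) := mul_nonneg hN'.le (by linarith)
    rw [abs_le]; constructor <;> nlinarith
  have b3 : |c * (H * Real.log H - N * Real.log N)| ≤ c * 2 * H := by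
    rw [abs_mul, abs_of_nonneg hc0, mul_assoc]; gcongr
  rw [Real.norm_eq_abs, Real.norm_eq_abs, abs_of_pos hH0]
  have e : A - c * H * Real.log H = (A - N * T) + N * (T - c * Real.log N)
      - c * (H * Real.log H - N * Real.log N) := by ring
  rw [e]
  have t1 := abs_sub ((A - N * T) + N * (T - c * Real.log N))
    (c * (H * Real.log H - N * Real.log N))
  have t2 := abs_add_le (A - N * T) (N * (T - c * Real.log N))
  linarith
end

section
/- For k ≥ 2, the number S_k(H) of pairs of positive integers x₁, x₂ ≤ H with x₁·x₂ a perfect k-th power satisfies S_k(H) = c_k H^{2/k} (log H)^{k−1} + O(H^{2/k} (log H)^{k−2}), where c_k = (P_k/((k−1)!)²)·(1 + k^{−(k−2)} Σ_{k/2 < m ≤ k−1} (−1)^{k−m} (2m−k)^{k−1} C(k−1,m)/(k−m)) and P_k = Π_p (1 − 1/p)^{k−1}(1 + (k−1)/p). -/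
open Filter
open scoped Classical

namespace SkAux

/-- Volume of `{t ≥ 0 : ∑ c_j t_j ≤ x, ∑ (k - c_j) t_j ≤ y}`. -/
noncomputable def V (k : ℕ) : (n : ℕ) → (Fin n → ℕ) → ℝ → ℝ → ℝ
  | 0, _, x, y => if 0 ≤ x ∧ 0 ≤ y then 1 else 0
  | n + 1, c, x, y =>
      ∫ t in Set.Ioi (0 : ℝ), V k n (Fin.tail c) (x - c 0 * t) (y - ((k : ℝ) - c 0) * t)

def Good (k : ℕ) {n : ℕ} (c : Fin n → ℕ) : Prop := ∀ i, 1 ≤ c i ∧ c i + 1 ≤ k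

theorem Good.tail {k n : ℕ} {c : Fin (n + 1) → ℕ} (h : Good k c) : Good k (Fin.tail c) :=
  fun i => h i.succ

theorem Good.one_le {k n : ℕ} {c : Fin n → ℕ} (h : Good k c) (i) : (1 : ℝ) ≤ c i := by
  exact_mod_cast (h i).1

theorem Good.one_le' {k n : ℕ} {c : Fin n → ℕ} (h : Good k c) (i) : (1 : ℝ) ≤ (k : ℝ) - c i := by
  have : ((c i + 1 : ℕ) : ℝ) ≤ k := by exact_mod_cast (h i).2
  push_cast at this; linarith

theorem V_nonneg (k n : ℕ) (c : Fin n → ℕ) (x y : ℝ) : 0 ≤ V k n c x y := by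
  induction n generalizing x y with
  | zero => unfold V; split_ifs <;> norm_num
  | succ n ih => unfold V; exact MeasureTheory.integral_nonneg fun t => ih _ _ _

theorem V_zero {k n : ℕ} {c : Fin n → ℕ} (h : Good k c) {x y : ℝ} (hxy : x < 0 ∨ y < 0) :
    V k n c x y = 0 := by
  induction n generalizing x y with
  | zero =>
    unfold V; rw [if_neg]; rintro ⟨h1, h2⟩; rcases hxy with h | h <;> linarith
  | succ n ih =>
    unfold V
    rw [MeasureTheory.setIntegral_eq_zero_of_forall_eq_zero]
    intro t ht
    have ht : 0 < t := ht
    apply ih h.tail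
    have h1 := h.one_le 0
    have h2 := h.one_le' 0
    rcases hxy with h | h
    · left; nlinarith
    · right; nlinarith

theorem V_succ {k n : ℕ} {c : Fin (n + 1) → ℕ} (h : Good k c) {x y M : ℝ} (hM : 0 ≤ M)
    (hx : x ≤ M ∨ x + y ≤ k * M) :
    V k (n + 1) c x y =
      ∫ t in (0 : ℝ)..M, V k n (Fin.tail c) (x - c 0 * t) (y - ((k : ℝ) - c 0) * t) := by
  rw [intervalIntegral.integral_of_le hM, V]
  apply MeasureTheory.setIntegral_eq_of_subset_of_forall_sdiff_eq_zero measurableSet_Ioi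
  · exact fun t ht => ht.1
  · rintro t ⟨ht, ht'⟩
    have ht0 : 0 < t := ht
    have : M < t := by
      by_contra hh; exact ht' ⟨ht, not_lt.1 hh⟩
    apply V_zero h.tail
    have h1 := h.one_le 0
    have h2 := h.one_le' 0
    rcases hx with hx | hx
    · left; nlinarith
    · by_contra hcon
      push Not at hcon
      nlinarith [hcon.1, hcon.2]

theorem V_mono {k n : ℕ} {c : Fin n → ℕ} (h : Good k c) {x y x' y' : ℝ} (hx : x ≤ x')
    (hy : y ≤ y') : V k n c x y ≤ V k n c x' y' := by
  induction n generalizing x y x' y' with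
  | zero =>
    unfold V; split_ifs with h1 h2
    · rfl
    · exact absurd ⟨h1.1.trans hx, h1.2.trans hy⟩ h2
    · norm_num
    · rfl
  | succ n ih =>
    have hM : (0 : ℝ) ≤ max 0 x' := le_max_left _ _
    rw [V_succ h hM (Or.inl (hx.trans (le_max_right _ _))), V_succ h hM (Or.inl (le_max_right _ _))]
    have h1 := h.one_le 0
    have h2 := h.one_le' 0
    have key : ∀ x y : ℝ, IntervalIntegrable (fun t => V k n (Fin.tail c) (x - c 0 * t)
        (y - ((k : ℝ) - c 0) * t)) MeasureTheory.volume 0 (max 0 x') := by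
      intro x y
      apply Antitone.intervalIntegrable
      intro s t hst
      apply ih h.tail <;> nlinarith
    apply intervalIntegral.integral_mono_on hM (key _ _) (key _ _)
    intro t _
    apply ih h.tail <;> linarith

theorem V_anti {k n : ℕ} {c : Fin (n + 1) → ℕ} (h : Good k c) (x y : ℝ) :
    Antitone (fun t : ℝ => V k n (Fin.tail c) (x - c 0 * t) (y - ((k : ℝ) - c 0) * t)) := by
  have h1 := h.one_le 0
  have h2 := h.one_le' 0
  intro s t hst
  apply V_mono h.tail <;> nlinarith

theorem V_le {k n : ℕ} {c : Fin n → ℕ} (h : Good k c) {x y L : ℝ} (hL : 0 ≤ L) (hx : x ≤ L) :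
    V k n c x y ≤ L ^ n := by
  induction n generalizing x y with
  | zero => unfold V; split_ifs <;> norm_num
  | succ n ih =>
    rw [V_succ h hL (Or.inl hx)]
    have h1 := h.one_le 0
    calc _ ≤ ∫ t in (0 : ℝ)..L, L ^ n := by
          apply intervalIntegral.integral_mono_on hL (V_anti h x y).intervalIntegrable (by simp)
          intro t ht
          apply ih h.tail
          nlinarith [ht.1]
      _ = L ^ (n + 1) := by simp; ring

theorem V_one {k : ℕ} {c : Fin 1 → ℕ} (h : Good k c) (x y : ℝ) :
    V k 1 c x y = max 0 (min (x / c 0) (y / ((k : ℝ) - c 0))) := by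
  have h1 := h.one_le 0
  have h2 := h.one_le' 0
  by_cases hxy : x < 0 ∨ y < 0
  · rw [V_zero h hxy, max_eq_left]
    rcases hxy with h | h
    · exact (min_le_left _ _).trans (div_nonpos_of_nonpos_of_nonneg h.le (by linarith))
    · exact (min_le_right _ _).trans (div_nonpos_of_nonpos_of_nonneg h.le (by linarith))
  push Not at hxy
  have hm : 0 ≤ min (x / c 0) (y / ((k : ℝ) - c 0)) :=
    le_min (div_nonneg hxy.1 (by linarith)) (div_nonneg hxy.2 (by linarith))
  rw [max_eq_right hm]
  unfold V
  have : ∀ t ∈ Set.Ioi (0 : ℝ), V k 0 (Fin.tail c) (x - c 0 * t) (y - ((k : ℝ) - c 0) * t)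
      = (Set.Iic (min (x / c 0) (y / ((k : ℝ) - c 0)))).indicator (fun _ => (1 : ℝ)) t := by
    intro t ht
    unfold V
    rw [Set.indicator_apply]
    congr 1
    rw [Set.mem_Iic, le_min_iff, le_div_iff₀ (by linarith), le_div_iff₀ (by linarith)]
    rw [eq_iff_iff]
    constructor
    · rintro ⟨a, b⟩; constructor <;> linarith
    · rintro ⟨a, b⟩; constructor <;> linarith
  rw [MeasureTheory.setIntegral_congr_fun measurableSet_Ioi this,
    MeasureTheory.setIntegral_indicator measurableSet_Iic, Set.Ioi_inter_Iic]
  simp [hm]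

theorem V_lip {k n : ℕ} {c : Fin (n + 1) → ℕ} (h : Good k c) {x y s s' L : ℝ} (hL : 0 ≤ L)
    (hx : x ≤ L) (hs : 0 ≤ s) (hs' : 0 ≤ s') :
    V k (n + 1) c x y - V k (n + 1) c (x - s) (y - s') ≤ (s + s') * (1 + L) ^ n := by
  induction n generalizing x y with
  | zero =>
    have h1 := h.one_le 0
    have h2 := h.one_le' 0
    rw [V_one h, V_one h]
    have e1 : x / c 0 ≤ (x - s) / c 0 + (s + s') := by
      rw [div_add' _ _ _ (by linarith)]
      gcongr; nlinarith
    have e2 : y / ((k : ℝ) - c 0) ≤ (y - s') / ((k : ℝ) - c 0) + (s + s') := by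
      rw [div_add' _ _ _ (by linarith)]
      gcongr; nlinarith
    have e3 := min_le_min e1 e2
    simp only [zero_add, pow_zero, mul_one]
    rw [sub_le_iff_le_add']
    apply max_le
    · have := le_max_left 0 (min ((x - s) / c 0) ((y - s') / ((k : ℝ) - c 0))); linarith
    · have := le_max_right 0 (min ((x - s) / c 0) ((y - s') / ((k : ℝ) - c 0)))
      rw [min_add_add_right] at e3; linarith
  | succ n ih =>
    rw [V_succ h hL (Or.inl hx), V_succ h hL (Or.inl (by linarith)),
      ← intervalIntegral.integral_sub (V_anti h x y).intervalIntegrable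
        (V_anti h _ _).intervalIntegrable]
    have h1 := h.one_le 0
    calc _ ≤ ∫ t in (0 : ℝ)..L, (s + s') * (1 + L) ^ n := by
          apply intervalIntegral.integral_mono_on hL ((V_anti h x y).intervalIntegrable.sub
            (V_anti h _ _).intervalIntegrable) (by simp)
          intro t ht
          have := ih h.tail (x := x - c 0 * t) (y := y - ((k : ℝ) - c 0) * t)
            (by nlinarith [ht.1])
          convert this using 3 <;> ring
      _ ≤ (s + s') * (1 + L) ^ (n + 1) := by
        simp
        rw [pow_succ]
        have : 0 ≤ (s + s') * (1 + L) ^ n := by positivity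
        nlinarith

end SkAux

namespace SkAux

theorem hasDerivAt_tpow (N : ℕ) (u : ℝ) :
    HasDerivAt (fun u : ℝ => (max 0 u) ^ (N + 2)) ((N + 2 : ℝ) * (max 0 u) ^ (N + 1)) u := by
  rcases lt_trichotomy u 0 with hu | hu | hu
  · rw [max_eq_left hu.le]
    have : (fun u : ℝ => (max 0 u) ^ (N + 2)) =ᶠ[nhds u] fun _ => 0 := by
      filter_upwards [eventually_lt_nhds hu] with v hv
      rw [max_eq_left hv.le]; simp
    simpa using (hasDerivAt_const u (0 : ℝ)).congr_of_eventuallyEq this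
  · subst hu
    rw [hasDerivAt_iff_isLittleO]
    simp only [max_self, ne_eq, Nat.add_eq_zero_iff, one_ne_zero, and_false, not_false_eq_true,
      zero_pow, OfNat.ofNat_ne_zero, sub_zero, mul_zero, smul_zero]
    have h1 : (fun v : ℝ => (max 0 v) ^ (N + 2)) =O[nhds 0] fun v : ℝ => v ^ (N + 2) := by
      apply Asymptotics.IsBigO.of_bound 1
      filter_upwards with v
      rw [norm_pow, norm_pow, one_mul]
      apply pow_le_pow_left₀ (norm_nonneg _)
      rw [Real.norm_eq_abs, Real.norm_eq_abs, abs_of_nonneg (le_max_left _ _)]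
      exact max_le (abs_nonneg _) (le_abs_self _)
    exact h1.trans_isLittleO (Asymptotics.isLittleO_pow_id (by omega))
  · rw [max_eq_right hu.le]
    have : (fun u : ℝ => (max 0 u) ^ (N + 2)) =ᶠ[nhds u] fun u => u ^ (N + 2) := by
      filter_upwards [eventually_gt_nhds hu] with v hv
      rw [max_eq_right hv.le]
    have h2 := (hasDerivAt_pow (N + 2) u).congr_of_eventuallyEq this
    simpa using h2

theorem integral_tpow (N : ℕ) (u δ T : ℝ) (hδ : δ ≠ 0) :
    ∫ t in (0 : ℝ)..T, (max 0 (u - δ * t)) ^ (N + 1) =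
      ((max 0 u) ^ (N + 2) - (max 0 (u - δ * T)) ^ (N + 2)) / ((N + 2 : ℝ) * δ) := by
  have hd : ∀ t : ℝ, HasDerivAt (fun t : ℝ => -(max 0 (u - δ * t)) ^ (N + 2) / ((N + 2 : ℝ) * δ))
      ((max 0 (u - δ * t)) ^ (N + 1)) t := by
    intro t
    have h1 : HasDerivAt (fun t : ℝ => u - δ * t) (-δ) t := by
      simpa using ((hasDerivAt_id t).const_mul δ).const_sub u
    have h2 := (((hasDerivAt_tpow N (u - δ * t)).comp t h1).neg).div_const ((N + 2 : ℝ) * δ)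
    have hN : (N + 2 : ℝ) ≠ 0 := by positivity
    refine h2.congr_deriv ?_
    field_simp
  rw [intervalIntegral.integral_eq_sub_of_hasDerivAt (fun t _ => hd t)]
  · simp; ring
  · apply Continuous.intervalIntegrable; fun_prop

def nodes (k : ℕ) {n : ℕ} (c : Fin n → ℕ) : Finset ℕ := insert 0 (insert k (Finset.univ.image c))

noncomputable def wt (k : ℕ) (M : Finset ℕ) (m : ℕ) : ℝ :=
  (∏ j ∈ M.erase m, ((k : ℝ) * ((m : ℝ) - j)))⁻¹

theorem sum_wt {k : ℕ} (M : Finset ℕ) (hM : 2 ≤ M.card) : ∑ m ∈ M, wt k M m = 0 := by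
  have h := Lagrange.coeff_eq_sum (s := M) (v := fun i : ℕ => (i : ℝ)) (P := 1)
    (Nat.cast_injective.injOn) (by rw [Polynomial.degree_one]; exact_mod_cast (by omega))
  rw [Polynomial.coeff_one, if_neg (by omega)] at h
  have : ∀ m ∈ M, wt k M m = ((k : ℝ) ^ (M.card - 1))⁻¹ *
      (Polynomial.eval (m : ℝ) 1 / ∏ j ∈ M.erase m, ((m : ℝ) - j)) := by
    intro m hm
    unfold wt
    rw [Finset.prod_mul_distrib, Finset.prod_const, Finset.card_erase_of_mem hm]
    simp [mul_comm]
  rw [Finset.sum_congr rfl this, ← Finset.mul_sum, ← h, mul_zero]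

theorem nodes_succ (k : ℕ) {n : ℕ} (c : Fin (n + 1) → ℕ) :
    nodes k c = insert (c 0) (nodes k (Fin.tail c)) := by
  unfold nodes
  ext m
  simp only [Finset.mem_insert, Finset.mem_image, Finset.mem_univ, true_and, Fin.exists_fin_succ,
    Fin.tail]
  grind

theorem c0_notMem {k n : ℕ} {c : Fin (n + 1) → ℕ} (h : Good k c) (hc : Function.Injective c) :
    c 0 ∉ nodes k (Fin.tail c) := by
  unfold nodes
  simp only [Finset.mem_insert, Finset.mem_image, Finset.mem_univ, true_and, Fin.tail]
  have := h 0
  rintro (h | h | ⟨i, hi⟩)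
  · omega
  · omega
  · exact absurd (hc hi) (Fin.succ_ne_zero i)

theorem V_formula {k n : ℕ} {c : Fin (n + 1) → ℕ} (h : Good k c) (hc : Function.Injective c)
    {x y : ℝ} (hxy : 0 ≤ x + y) :
    V k (n + 1) c x y = (k : ℝ) ^ 2 / ((n + 1).factorial : ℝ) *
      ∑ m ∈ nodes k c, wt k (nodes k c) m * (max 0 ((m : ℝ) * y - ((k : ℝ) - m) * x)) ^ (n + 1) := by
  have h1 := h.one_le 0
  have h2 := h.one_le' 0
  have hk0 : (0 : ℝ) < k := by linarith
  induction n generalizing x y with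
  | zero =>
    rw [V_one h]
    have e : nodes k c = {0, c 0, k} := by
      unfold nodes; ext m; simp; grind
    have g := h 0
    have hcne : (c 0 : ℝ) ≠ 0 := by linarith
    have n1 : (0 : ℕ) ≠ c 0 := by omega
    have n2 : (0 : ℕ) ≠ k := by omega
    have n3 : c 0 ≠ k := by omega
    rw [e, Finset.sum_insert (by simp [n1, n2]), Finset.sum_insert (by simp [n3]),
      Finset.sum_singleton]
    have w0 : wt k {0, c 0, k} 0 = 1 / ((k : ℝ) ^ 3 * c 0) := by
      unfold wt
      have : ({0, c 0, k} : Finset ℕ).erase 0 = {c 0, k} := by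
        ext m; simp; grind
      rw [this, Finset.prod_pair n3]; push_cast; simp only [zero_sub]; field_simp
    have w1 : wt k {0, c 0, k} (c 0) = - (1 / ((k : ℝ) ^ 2 * c 0 * (k - c 0))) := by
      unfold wt
      have : ({0, c 0, k} : Finset ℕ).erase (c 0) = {0, k} := by
        ext m; simp; grind
      have hne : (c 0 : ℝ) - k ≠ 0 := by linarith
      have hne' : (k : ℝ) - c 0 ≠ 0 := by linarith
      rw [this, Finset.prod_pair n2, ← neg_sub (k : ℝ)]; push_cast; simp only [sub_zero]; field_simp
    have w2 : wt k {0, c 0, k} k = 1 / ((k : ℝ) ^ 3 * (k - c 0)) := by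
      unfold wt
      have : ({0, c 0, k} : Finset ℕ).erase k = {0, c 0} := by
        ext m; simp; grind
      have hne' : (k : ℝ) - c 0 ≠ 0 := by linarith
      rw [this, Finset.prod_pair n1]; push_cast; simp only [sub_zero]; field_simp
    rw [w0, w1, w2]
    set a : ℝ := (c 0 : ℝ)
    set b : ℝ := (k : ℝ) - c 0 with hb
    simp only [zero_add, pow_one, Nat.factorial_one, Nat.cast_one, div_one, Nat.cast_zero, zero_mul,
      sub_zero, zero_sub, sub_self]
    have ha0 : 0 < a := by linarith
    have hb0 : 0 < b := by linarith
    obtain ⟨X, hX⟩ : ∃ X, x = a * X := ⟨x / a, by field_simp⟩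
    obtain ⟨Y, hY⟩ : ∃ Y, y = b * Y := ⟨y / b, by field_simp⟩
    have e1 : (max 0 (a * y - b * x)) = a * b * max 0 (Y - X) := by
      rw [mul_max_of_nonneg _ _ (by positivity), hX, hY]; congr 1 <;> ring
    have e2 : max 0 (-((k : ℝ) * x)) = k * a * max 0 (-X) := by
      rw [mul_max_of_nonneg _ _ (by positivity), hX]; congr 1 <;> ring
    have e3 : max 0 ((k : ℝ) * y) = k * b * max 0 Y := by
      rw [mul_max_of_nonneg _ _ (by positivity), hY]; congr 1 <;> ring
    rw [e1, e2, e3]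
    have f1 : x / a = X := by rw [hX]; field_simp
    have f2 : y / b = Y := by rw [hY]; field_simp
    rw [f1, f2]
    have key : max 0 (min X Y) = max 0 (-X) - max 0 (Y - X) + max 0 Y := by
      rcases le_or_gt 0 X with h1 | h1
      · rcases le_or_gt 0 Y with h2 | h2
        · rcases le_total X Y with h3 | h3
          · rw [min_eq_left h3, max_eq_right h1, max_eq_left (by linarith), max_eq_right (by linarith),
              max_eq_right h2]; ring
          · rw [min_eq_right h3, max_eq_right h2, max_eq_left (by linarith),
              max_eq_left (by linarith)]; ring
        · rw [min_eq_right (by linarith), max_eq_left h2.le, max_eq_left (by linarith),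
            max_eq_left (by linarith)]; ring
      · have h2 : 0 ≤ Y := by
          rw [hX, hY] at hxy
          by_contra hcon
          push Not at hcon
          nlinarith
        rw [min_eq_left (by linarith), max_eq_left h1.le, max_eq_right (by linarith),
          max_eq_right (by linarith), max_eq_right h2]; ring
    rw [key]
    field_simp
    ring
  | succ n ih =>
    set T : ℝ := (x + y) / k with hT
    have hT0 : 0 ≤ T := by positivity
    have hkT : (k : ℝ) * T = x + y := by rw [hT]; field_simp
    rw [V_succ h hT0 (Or.inr hkT.ge)]
    set N := nodes k (Fin.tail c) with hN
    have hc0 : c 0 ∉ N := c0_notMem h hc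
    have htc : Function.Injective (Fin.tail c) := fun i j hij => by
      have := hc hij; simpa using this
    have hne : ∀ m ∈ N, (k : ℝ) * ((m : ℝ) - c 0) ≠ 0 := by
      intro m hm
      apply mul_ne_zero hk0.ne'
      rw [sub_ne_zero]
      intro hh
      have : m = c 0 := by exact_mod_cast hh
      exact hc0 (this ▸ hm)
    have step1 : ∫ t in (0 : ℝ)..T, V k (n + 1) (Fin.tail c) (x - c 0 * t) (y - ((k : ℝ) - c 0) * t)
        = ∫ t in (0 : ℝ)..T, (k : ℝ) ^ 2 / ((n + 1).factorial : ℝ) *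
          ∑ m ∈ N, wt k N m * (max 0 (((m : ℝ) * y - ((k : ℝ) - m) * x) -
            ((k : ℝ) * ((m : ℝ) - c 0)) * t)) ^ (n + 1) := by
      apply intervalIntegral.integral_congr
      intro t ht
      rw [Set.uIcc_of_le hT0] at ht
      simp only
      rw [ih h.tail htc (x := x - c 0 * t) (y := y - ((k : ℝ) - c 0) * t) (by nlinarith [ht.2])
        (h.tail.one_le 0) (h.tail.one_le' 0)]
      congr 1
      apply Finset.sum_congr rfl
      intro m _
      congr 3
      ring
    rw [step1, intervalIntegral.integral_const_mul, intervalIntegral.integral_finsetSum]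
    swap
    · intro m _
      apply Continuous.intervalIntegrable; fun_prop
    have hwt : ∀ m ∈ N, wt k (insert (c 0) N) m = wt k N m / ((k : ℝ) * ((m : ℝ) - c 0)) := by
      intro m hm
      unfold wt
      have hmc : c 0 ≠ m := fun hh => hc0 (hh ▸ hm)
      rw [Finset.erase_insert_of_ne hmc, Finset.prod_insert (fun hh => hc0 (Finset.mem_of_mem_erase hh))]
      rw [mul_inv, div_eq_mul_inv]; ring
    have hsum := sum_wt (k := k) (insert (c 0) N) (by
      rw [Finset.card_insert_of_notMem hc0]
      have : 0 < N.card := Finset.card_pos.2 ⟨0, by simp [hN, nodes]⟩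
      omega)
    rw [Finset.sum_insert hc0] at hsum
    rw [nodes_succ, ← hN, Finset.sum_insert hc0]
    have hl : ∀ m : ℕ, ((m : ℝ) * y - ((k : ℝ) - m) * x) - ((k : ℝ) * ((m : ℝ) - c 0)) * T
        = (c 0 : ℝ) * y - ((k : ℝ) - c 0) * x := by
      intro m
      have : ((k : ℝ) * ((m : ℝ) - c 0)) * T = ((m : ℝ) - c 0) * (k * T) := by ring
      rw [this, hkT]; ring
    have e : ∀ m ∈ N, ∫ t in (0 : ℝ)..T, wt k N m * (max 0 (((m : ℝ) * y - ((k : ℝ) - m) * x) -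
            ((k : ℝ) * ((m : ℝ) - c 0)) * t)) ^ (n + 1) =
        (1 / (n + 2 : ℝ)) * (wt k (insert (c 0) N) m *
          (max 0 ((m : ℝ) * y - ((k : ℝ) - m) * x)) ^ (n + 2)
         - wt k (insert (c 0) N) m * (max 0 ((c 0 : ℝ) * y - ((k : ℝ) - c 0) * x)) ^ (n + 2)) := by
      intro m hm
      rw [intervalIntegral.integral_const_mul, integral_tpow _ _ _ _ (hne m hm), hl, hwt m hm]
      have := hne m hm
      have hn2 : (n + 2 : ℝ) ≠ 0 := by positivity
      rw [← mul_sub]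
      generalize (k : ℝ) * ((m : ℝ) - c 0) = D at *
      field_simp
    rw [Finset.sum_congr rfl e, ← Finset.mul_sum, Finset.sum_sub_distrib, ← Finset.sum_mul]
    have hw0 : ∑ m ∈ N, wt k (insert (c 0) N) m = - wt k (insert (c 0) N) (c 0) := by linarith
    rw [hw0, Nat.factorial_succ (n + 1)]
    push_cast
    have hf : ((n + 1).factorial : ℝ) ≠ 0 := by positivity
    have hn2 : (n + 2 : ℝ) ≠ 0 := by positivity
    have hn3 : (n + 1 + 1 : ℝ) ≠ 0 := by positivity
    have : (n + 1 + 1 : ℝ) = n + 2 := by ring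
    rw [this]
    simp only [show n + 1 + 1 = n + 2 from rfl]
    generalize ∑ m ∈ N, wt k (insert (c 0) N) m *
      (max 0 ((m : ℝ) * y - ((k : ℝ) - m) * x)) ^ (n + 2) = Z
    field_simp
    ring

/-- the diagonal value -/
theorem V_diag (k : ℕ) (hk : 2 ≤ k) (L : ℝ) (hL : 0 ≤ L) :
    V k (k - 1) (fun j => j + 1) L L = (1 / (Nat.factorial (k - 1) : ℝ) ^ 2) *
                (1 + (1 / (k : ℝ) ^ (k - 2)) *
                  ∑ m ∈ Finset.Ioc (k / 2) (k - 1),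
                    (-1 : ℝ) ^ (k - m) * (2 * (m : ℝ) - k) ^ (k - 1) *
                      ((k - 1).choose m) / ((k : ℝ) - m)) * L ^ (k - 1) := by
  obtain ⟨n, rfl⟩ : ∃ n, k = n + 2 := ⟨k - 2, by omega⟩
  have hgood : Good (n + 2) (fun j : Fin (n + 1) => (j : ℕ) + 1) := by
    intro j; have := j.2; constructor <;> simp <;> omega
  have hinj : Function.Injective (fun j : Fin (n + 1) => (j : ℕ) + 1) := by
    intro i j hij; simp at hij; exact Fin.ext hij
  have := V_formula hgood hinj (x := L) (y := L) (by linarith)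
  simp only [show n + 2 - 1 = n + 1 from rfl, show n + 2 - 2 = n from rfl]
  refine this.trans ?_
  have hnodes : nodes (n + 2) (fun j : Fin (n + 1) => (j : ℕ) + 1) = Finset.range (n + 3) := by
    unfold nodes
    ext m
    simp only [Finset.mem_insert, Finset.mem_image, Finset.mem_univ, true_and, Finset.mem_range]
    constructor
    · rintro (h | h | ⟨j, h⟩) <;> omega
    · intro h
      by_cases h0 : m = 0
      · left; exact h0
      by_cases h1 : m = n + 2
      · right; left; exact h1
      · right; right; exact ⟨⟨m - 1, by omega⟩, by simp; omega⟩
  rw [hnodes]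
  set K : ℝ := ((n + 2 : ℕ) : ℝ) with hK
  have hK0 : 0 < K := by positivity
  have hwt : ∀ m ∈ Finset.range (n + 3), wt (n + 2) (Finset.range (n + 3)) m =
      (-1 : ℝ) ^ (n + 2 - m) / (K ^ (n + 2) * (m.factorial : ℝ) * ((n + 2 - m).factorial : ℝ)) := by
    intro m hm
    rw [Finset.mem_range] at hm
    unfold wt
    rw [Finset.prod_mul_distrib, Finset.prod_const, Finset.card_erase_of_mem (by simp; omega),
      Finset.card_range]
    have hprod : ∏ j ∈ (Finset.range (n + 3)).erase m, ((m : ℝ) - j) =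
        (m.factorial : ℝ) * ((-1) ^ (n + 2 - m) * ((n + 2 - m).factorial : ℝ)) := by
      have hsplit : (Finset.range (n + 3)).erase m =
          Finset.range m ∪ Finset.Ico (m + 1) (n + 3) := by
        ext j; simp; omega
      rw [hsplit, Finset.prod_union]
      swap
      · rw [Finset.disjoint_left]; intro j; simp; omega
      congr 1
      · rw [← Finset.prod_range_reflect, ← Finset.prod_range_add_one_eq_factorial]
        push_cast
        apply Finset.prod_congr rfl
        intro j hj
        rw [Finset.mem_range] at hj
        rw [Nat.cast_sub (by omega), Nat.cast_sub (by omega)]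
        push_cast; ring
      · rw [Finset.prod_Ico_eq_prod_range, ← Finset.prod_range_add_one_eq_factorial]
        have : n + 3 - (m + 1) = n + 2 - m := by omega
        rw [this]
        push_cast
        have h3 : (-1 : ℝ) ^ (n + 2 - m) = ∏ j ∈ Finset.range (n + 2 - m), (-1 : ℝ) := by simp
        rw [h3, ← Finset.prod_mul_distrib]
        apply Finset.prod_congr rfl
        intro j _
        push_cast; ring
    rw [hprod]
    have h4 : ((-1 : ℝ) ^ (n + 2 - m))⁻¹ = (-1) ^ (n + 2 - m) := by
      rw [← inv_pow]; norm_num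
    rw [show n + 3 - 1 = n + 2 from rfl, mul_inv, mul_inv, mul_inv, h4, div_eq_mul_inv, mul_inv,
      mul_inv]
    ring
  have hterm : ∀ m ∈ Finset.range (n + 3), wt (n + 2) (Finset.range (n + 3)) m *
      (max 0 ((m : ℝ) * L - (K - m) * L)) ^ (n + 1) =
      if (n + 2) / 2 < m then ((-1 : ℝ) ^ (n + 2 - m) * (2 * m - K) ^ (n + 1) /
        (K ^ (n + 2) * (m.factorial : ℝ) * ((n + 2 - m).factorial : ℝ))) * L ^ (n + 1) else 0 := by
    intro m hm
    rw [hwt m hm]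
    split_ifs with hlt
    · have : (n + 2 : ℕ) < 2 * m := by omega
      have h5 : K < 2 * m := by rw [hK]; exact_mod_cast this
      rw [max_eq_right (by nlinarith), show (m : ℝ) * L - (K - m) * L = (2 * m - K) * L by ring,
        mul_pow]
      ring
    · have : 2 * m ≤ (n + 2 : ℕ) := by omega
      have h5 : 2 * m ≤ K := by rw [hK]; exact_mod_cast this
      rw [max_eq_left (by nlinarith)]
      simp
  rw [Finset.sum_congr rfl hterm, ← Finset.sum_filter]
  have hfil : (Finset.range (n + 3)).filter (fun m => (n + 2) / 2 < m) =
      insert (n + 2) (Finset.Ioc ((n + 2) / 2) (n + 1)) := by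
    ext m; simp; omega
  rw [hfil, Finset.sum_insert (by simp), ← Finset.sum_mul]
  have hf1 : ((n + 1).factorial : ℝ) ≠ 0 := by positivity
  have hlast : ∑ m ∈ Finset.Ioc ((n + 2) / 2) (n + 1), ((-1 : ℝ) ^ (n + 2 - m) * (2 * m - K) ^ (n + 1) /
        (K ^ (n + 2) * (m.factorial : ℝ) * ((n + 2 - m).factorial : ℝ))) =
      (1 / (K ^ (n + 2) * ((n + 1).factorial : ℝ))) * ∑ m ∈ Finset.Ioc ((n + 2) / 2) (n + 1),
        (-1 : ℝ) ^ (n + 2 - m) * (2 * (m : ℝ) - K) ^ (n + 1) * ((n + 1).choose m) / (K - m) := by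
    rw [Finset.mul_sum]
    apply Finset.sum_congr rfl
    intro m hm
    rw [Finset.mem_Ioc] at hm
    obtain ⟨d, hd⟩ : ∃ d, n + 1 = m + d := ⟨n + 1 - m, by omega⟩
    have e1 : n + 2 - m = d + 1 := by omega
    have e2 : K - m = d + 1 := by
      rw [hK, show n + 2 = m + d + 1 by omega]; push_cast; ring
    have e3 : (((n + 1).choose m : ℕ) : ℝ) * (m.factorial * d.factorial) = (n + 1).factorial := by
      have := Nat.choose_mul_factorial_mul_factorial (n := n + 1) (k := m) (by omega)
      rw [show n + 1 - m = d by omega] at this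
      rw [← mul_assoc]
      exact_mod_cast this
    rw [e1, e2, ← e3, Nat.factorial_succ]
    have hc : (((n + 1).choose m : ℕ) : ℝ) ≠ 0 := by
      have := Nat.choose_pos (n := n + 1) (k := m) (by omega)
      positivity
    have hm0 : (m.factorial : ℝ) ≠ 0 := by positivity
    have hd0 : (d.factorial : ℝ) ≠ 0 := by positivity
    have hd1 : (d + 1 : ℝ) ≠ 0 := by positivity
    push_cast
    field_simp
  rw [hlast]
  generalize ∑ m ∈ Finset.Ioc ((n + 2) / 2) (n + 1),
        (-1 : ℝ) ^ (n + 2 - m) * (2 * (m : ℝ) - K) ^ (n + 1) * ((n + 1).choose m) / (K - m) = Z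
  rw [Nat.sub_self, Nat.factorial_succ (n + 1)]
  have e5 : (2 * ((n + 2 : ℕ) : ℝ) - K) = K := by rw [hK]; ring
  rw [e5]
  have e6 : (((n + 1 + 1) * (n + 1).factorial : ℕ) : ℝ) = K * (n + 1).factorial := by
    rw [hK]; push_cast; ring
  rw [e6]
  simp only [pow_zero, Nat.factorial_zero, Nat.cast_one, mul_one, one_mul]
  field_simp
  ring

end SkAux

namespace SkAux

theorem sum_ge_integral (φ : ℝ → ℝ) (hφ : Antitone φ) (h0 : ∀ t, 0 ≤ φ t) (N : ℕ) :
    ∫ t in (0 : ℝ)..Real.log (N + 1), φ t ≤ ∑ b ∈ Finset.Icc 1 N, (1 / (b : ℝ)) * φ (Real.log b) := by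
  induction N with
  | zero => simp
  | succ N ih =>
    rw [Finset.sum_Icc_succ_top (by omega)]
    rw [← intervalIntegral.integral_add_adjacent_intervals (b := Real.log (N + 1))
      hφ.intervalIntegrable hφ.intervalIntegrable]
    apply add_le_add ih
    have hN : (0 : ℝ) < N + 1 := by positivity
    have hle : Real.log (N + 1) ≤ Real.log ((N + 1 : ℕ) + 1) := by
      apply Real.log_le_log hN; push_cast; linarith
    calc _ ≤ ∫ t in Real.log (N + 1)..Real.log ((N + 1 : ℕ) + 1), φ (Real.log (N + 1)) := by
          apply intervalIntegral.integral_mono_on hle hφ.intervalIntegrable (by simp)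
          intro t ht
          exact hφ ht.1
      _ ≤ _ := by
          rw [intervalIntegral.integral_const, smul_eq_mul]
          push_cast
          apply mul_le_mul_of_nonneg_right _ (h0 _)
          rw [← Real.log_div (by positivity) (by positivity)]
          have := Real.log_le_sub_one_of_pos (x := ((N : ℝ) + 1 + 1) / (N + 1)) (by positivity)
          refine this.trans (le_of_eq ?_)
          field_simp
          ring

theorem sum_le_integral (φ : ℝ → ℝ) (hφ : Antitone φ) (h0 : ∀ t, 0 ≤ φ t) (N : ℕ) :
    ∑ b ∈ Finset.Icc 1 (N + 1), (1 / (b : ℝ)) * φ (Real.log b) ≤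
      φ 0 + ∫ t in (0 : ℝ)..Real.log (N + 1), φ t := by
  induction N with
  | zero => simp
  | succ N ih =>
    rw [Finset.sum_Icc_succ_top (by omega)]
    rw [← intervalIntegral.integral_add_adjacent_intervals (b := Real.log (N + 1))
      hφ.intervalIntegrable hφ.intervalIntegrable, ← add_assoc]
    apply add_le_add ih
    have hN : (0 : ℝ) < N + 1 := by positivity
    have hle : Real.log (N + 1) ≤ Real.log ((N + 1 : ℕ) + 1) := by
      apply Real.log_le_log hN; push_cast; linarith
    calc _ ≤ ∫ t in Real.log (N + 1)..Real.log ((N + 1 : ℕ) + 1), φ (Real.log ((N + 1 : ℕ) + 1)) := by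
          rw [intervalIntegral.integral_const, smul_eq_mul]
          push_cast
          apply mul_le_mul_of_nonneg_right _ (h0 _)
          rw [← Real.log_div (by positivity) (by positivity)]
          have := Real.one_sub_inv_le_log_of_pos (x := ((N : ℝ) + 1 + 1) / (N + 1)) (by positivity)
          refine le_trans (le_of_eq ?_) this
          field_simp
          ring
      _ ≤ _ := by
          apply intervalIntegral.integral_mono_on hle (by simp) hφ.intervalIntegrable
          intro t ht
          exact hφ ht.2

def Adm (k : ℕ) {n : ℕ} (c : Fin n → ℕ) (a : Fin n → ℕ) (x y : ℝ) : Prop :=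
  (∀ j, 0 < a j) ∧ ∑ j, (c j : ℝ) * Real.log (a j) ≤ x ∧
    ∑ j, ((k : ℝ) - c j) * Real.log (a j) ≤ y

noncomputable def tm (k : ℕ) {n : ℕ} (c : Fin n → ℕ) (g : (Fin n → ℕ) → ℝ) (x y : ℝ)
    (a : Fin n → ℕ) : ℝ :=
  if Adm k c a x y then g a * ∏ j, (1 / (a j : ℝ)) else 0

noncomputable def R (k : ℕ) {n : ℕ} (c : Fin n → ℕ) (g : (Fin n → ℕ) → ℝ) (x y : ℝ) : ℝ :=
  ∑' a : Fin n → ℕ, tm k c g x y a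

theorem Adm.le {k n : ℕ} {c : Fin n → ℕ} (h : Good k c) {a : Fin n → ℕ} {x y : ℝ}
    (ha : Adm k c a x y) (j : Fin n) : a j ≤ ⌊Real.exp x⌋₊ := by
  have hl : ∀ i, 0 ≤ Real.log (a i) := fun i => Real.log_natCast_nonneg _
  have h1 : (c j : ℝ) * Real.log (a j) ≤ ∑ j, (c j : ℝ) * Real.log (a j) :=
    Finset.single_le_sum (f := fun j => (c j : ℝ) * Real.log (a j))
      (fun i _ => mul_nonneg (Nat.cast_nonneg _) (hl i)) (Finset.mem_univ j)
  have h2 : Real.log (a j) ≤ x := by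
    have := h.one_le j
    nlinarith [hl j, ha.2.1]
  apply Nat.le_floor
  have h0 : (0 : ℝ) < a j := by exact_mod_cast ha.1 j
  rwa [← Real.log_le_iff_le_exp h0]

theorem tm_support {k n : ℕ} {c : Fin n → ℕ} (h : Good k c) (g : (Fin n → ℕ) → ℝ) (x y : ℝ)
    {N : ℕ} (hN : ⌊Real.exp x⌋₊ ≤ N) :
    Function.support (tm k c g x y) ⊆ ↑(Fintype.piFinset (fun _ : Fin n => Finset.Icc 1 N)) := by
  intro a ha
  rw [Function.mem_support] at ha
  unfold tm at ha
  split_ifs at ha with hA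
  · simp only [Finset.mem_coe, Fintype.mem_piFinset, Finset.mem_Icc]
    exact fun j => ⟨hA.1 j, (hA.le h j).trans hN⟩
  · exact absurd rfl ha

theorem tm_summable {k n : ℕ} {c : Fin n → ℕ} (h : Good k c) (g : (Fin n → ℕ) → ℝ) (x y : ℝ) :
    Summable (tm k c g x y) :=
  summable_of_hasFiniteSupport ((Finset.finite_toSet _).subset (tm_support h g x y le_rfl))

theorem R_eq_sum {k n : ℕ} {c : Fin n → ℕ} (h : Good k c) (g : (Fin n → ℕ) → ℝ) (x y : ℝ)
    {N : ℕ} (hN : ⌊Real.exp x⌋₊ ≤ N) :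
    R k c g x y = ∑ a ∈ Fintype.piFinset (fun _ : Fin n => Finset.Icc 1 N), tm k c g x y a := by
  unfold R
  rw [tsum_eq_sum]
  intro a ha
  by_contra hne
  exact ha (tm_support h g x y hN hne)

theorem R_zero {k n : ℕ} {c : Fin n → ℕ} (g : (Fin n → ℕ) → ℝ) {x y : ℝ}
    (hx : x < 0) : R k c g x y = 0 := by
  unfold R
  have : tm k c g x y = 0 := by
    ext a
    unfold tm
    rw [if_neg]; rfl
    rintro ⟨_, h1, _⟩
    have : 0 ≤ ∑ j, (c j : ℝ) * Real.log (a j) :=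
      Finset.sum_nonneg fun i _ => mul_nonneg (Nat.cast_nonneg _) (Real.log_natCast_nonneg _)
    linarith
  rw [this]; exact tsum_zero

theorem R_succ {k n : ℕ} {c : Fin (n + 1) → ℕ} (h : Good k c) (x y : ℝ)
    {N : ℕ} (hN : ⌊Real.exp x⌋₊ ≤ N) :
    R k c (fun _ => 1) x y = ∑ b ∈ Finset.Icc 1 N, (1 / (b : ℝ)) *
      R k (Fin.tail c) (fun _ => 1) (x - c 0 * Real.log b) (y - ((k : ℝ) - c 0) * Real.log b) := by
  have hs := tm_summable h (fun _ => 1) x y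
  have e : ∀ b : ℕ, 0 < b → ∀ a : Fin n → ℕ, tm k c (fun _ => 1) x y (Fin.cons b a) =
      (1 / (b : ℝ)) * tm k (Fin.tail c) (fun _ => 1) (x - c 0 * Real.log b)
        (y - ((k : ℝ) - c 0) * Real.log b) a := by
    intro b hb a
    unfold tm Adm
    simp only [Fin.forall_fin_succ, Fin.cons_zero, Fin.cons_succ, Fin.sum_univ_succ,
      Fin.prod_univ_succ, Fin.tail, hb, true_and, mul_ite, mul_zero, one_mul, le_sub_iff_add_le']
  unfold R
  rw [← (Fin.consEquiv (fun _ : Fin (n + 1) => ℕ)).tsum_eq]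
  have hs2 : Summable (fun p : ℕ × (Fin n → ℕ) => tm k c (fun _ => 1) x y
      ((Fin.consEquiv (fun _ : Fin (n + 1) => ℕ)) p)) := (Equiv.summable_iff _).2 hs
  rw [Summable.tsum_prod hs2]
  rw [tsum_eq_sum (s := Finset.Icc 1 N)]
  · apply Finset.sum_congr rfl
    intro b hb
    rw [Finset.mem_Icc] at hb
    rw [← tsum_mul_left]
    apply tsum_congr
    intro a
    exact e b hb.1 a
  · intro b hb
    have : ∀ a : Fin n → ℕ, tm k c (fun _ => 1) x y ((Fin.consEquiv (fun _ : Fin (n + 1) => ℕ)) (b, a)) = 0 := by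
      intro a
      by_contra hne
      have := tm_support h _ x y hN hne
      simp only [Finset.mem_coe, Fintype.mem_piFinset] at this
      exact hb (this 0)
    simp [this]

theorem R_V {k n : ℕ} {c : Fin n → ℕ} (h : Good k c) {x y L : ℝ} (hL : 0 ≤ L) (hx : x ≤ L) :
    0 ≤ R k c (fun _ => 1) x y - V k n c x y ∧
    R k c (fun _ => 1) x y - V k n c x y ≤ n * (1 + L) ^ (n - 1) := by
  induction n generalizing x y with
  | zero =>
    have : R k c (fun _ => 1) x y = V k 0 c x y := by
      unfold R V
      rw [tsum_eq_single default (fun b hb => absurd (Subsingleton.elim _ _) hb)]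
      simp [tm, Adm]
    simp [this]
  | succ n ih =>
    by_cases hx0 : x < 0
    · rw [R_zero _ hx0, V_zero h (Or.inl hx0)]; simp; positivity
    set N := ⌊Real.exp L⌋₊ with hNdef
    have hN : ⌊Real.exp x⌋₊ ≤ N := Nat.floor_le_floor (Real.exp_le_exp.2 hx)
    have hN1 : 1 ≤ N := by
      rw [hNdef, Nat.one_le_floor_iff]; exact Real.one_le_exp hL
    set φ : ℝ → ℝ := fun t => V k n (Fin.tail c) (x - c 0 * t) (y - ((k : ℝ) - c 0) * t) with hφ
    have hanti : Antitone φ := V_anti h x y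
    have hφ0 : ∀ t, 0 ≤ φ t := fun t => V_nonneg _ _ _ _ _
    rw [R_succ h x y hN]
    have hlow := sum_ge_integral φ hanti hφ0 N
    have hc := h.one_le 0
    constructor
    · have hM : L ≤ Real.log (N + 1) := by
        rw [Real.le_log_iff_exp_le (by positivity)]
        exact (Nat.lt_floor_add_one _).le
      rw [V_succ h (hL.trans hM) (Or.inl (hx.trans hM)), sub_nonneg]
      refine hlow.trans (Finset.sum_le_sum fun b hb => ?_)
      have := (ih h.tail (x := x - c 0 * Real.log b) (y := y - ((k : ℝ) - c 0) * Real.log b)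
        (by nlinarith [Real.log_natCast_nonneg b])).1
      apply mul_le_mul_of_nonneg_left _ (by positivity)
      simp only [hφ]; linarith
    · have hNle : (N : ℝ) ≤ Real.exp L := Nat.floor_le (Real.exp_pos _).le
      have hlogN : Real.log N ≤ L := by
        rw [Real.log_le_iff_le_exp (by exact_mod_cast hN1)]; exact hNle
      obtain ⟨N', hN'⟩ : ∃ N', N = N' + 1 := ⟨N - 1, by omega⟩
      have hup := sum_le_integral φ hanti hφ0 N'
      rw [← hN'] at hup
      have hcast : (N' : ℝ) + 1 = N := by rw [hN']; push_cast; ring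
      rw [hcast] at hup
      have hintg : ∫ t in (0 : ℝ)..Real.log N, φ t ≤ V k (n + 1) c x y := by
        rw [V_succ h hL (Or.inl hx)]
        apply intervalIntegral.integral_mono_interval le_rfl (Real.log_natCast_nonneg _) hlogN
        · filter_upwards with t using hφ0 t
        · exact hanti.intervalIntegrable
      have hharm : ∑ b ∈ Finset.Icc 1 N, (1 / (b : ℝ)) ≤ 1 + L := by
        have := harmonic_le_one_add_log N
        rw [harmonic_eq_sum_Icc] at this
        push_cast at this
        simp only [one_div]
        linarith
      have hb1 : ∑ b ∈ Finset.Icc 1 N, (1 / (b : ℝ)) *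
          R k (Fin.tail c) (fun _ => 1) (x - c 0 * Real.log b) (y - ((k : ℝ) - c 0) * Real.log b) ≤
          ∑ b ∈ Finset.Icc 1 N, (1 / (b : ℝ)) * φ (Real.log b) +
          (∑ b ∈ Finset.Icc 1 N, (1 / (b : ℝ))) * (n * (1 + L) ^ (n - 1)) := by
        rw [Finset.sum_mul, ← Finset.sum_add_distrib]
        refine Finset.sum_le_sum fun b hb => ?_
        have := (ih h.tail (x := x - c 0 * Real.log b) (y := y - ((k : ℝ) - c 0) * Real.log b)
          (by nlinarith [Real.log_natCast_nonneg b])).2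
        rw [← mul_add]
        apply mul_le_mul_of_nonneg_left _ (by positivity)
        simp only [hφ]; linarith
      have hv : φ 0 ≤ (1 + L) ^ n := by
        refine (V_le h.tail hL (by simpa using hx)).trans ?_
        apply pow_le_pow_left₀ hL; linarith
      have hp : (∑ b ∈ Finset.Icc 1 N, (1 / (b : ℝ))) * (n * (1 + L) ^ (n - 1)) ≤ n * (1 + L) ^ n := by
        rcases Nat.eq_zero_or_pos n with rfl | hn
        · simp
        · calc _ ≤ (1 + L) * (n * (1 + L) ^ (n - 1)) := by gcongr
            _ = n * (1 + L) ^ (n - 1 + 1) := by ring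
            _ = _ := by rw [Nat.sub_add_cancel hn]
      push_cast
      linarith

end SkAux

namespace SkAux

noncomputable def gS {n : ℕ} (S : Finset ℕ) (a : Fin n → ℕ) : ℝ :=
  if ∀ p ∈ S, ¬ p ^ 2 ∣ ∏ j, a j then 1 else 0

def ex {n : ℕ} (i : Finset (Fin n) × Option (Fin n)) (j : Fin n) : ℕ :=
  (if i.2 = some j then 1 else 0) + (if j ∈ i.1 then 1 else 0)

theorem alt_sum {n : ℕ} (w : Fin n → ℕ → ℝ) (o : Option (Fin n)) :
    ∑ U : Finset (Fin n), (-1 : ℝ) ^ U.card * ∏ j, w j (ex (U, o) j) =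
      ∏ j, (w j (if o = some j then 1 else 0) - w j ((if o = some j then 1 else 0) + 1)) := by
  have := Finset.prod_add (fun j => - w j ((if o = some j then 1 else 0) + 1))
    (fun j => w j (if o = some j then 1 else 0)) Finset.univ
  simp only [neg_add_eq_sub] at this
  rw [this, Finset.powerset_univ]
  apply Finset.sum_congr rfl
  intro U _
  rw [Finset.prod_neg, mul_assoc]
  congr 1
  rw [← Finset.prod_mul_prod_compl U]
  congr 1
  · apply Finset.prod_congr rfl
    intro j hj; simp [ex, hj]
  · rw [Finset.compl_eq_univ_sdiff]
    apply Finset.prod_congr rfl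
    intro j hj; simp at hj; simp [ex, hj]

/-- sum over all indices, for a general product weight -/
theorem alt_sum_all {n : ℕ} (w : Fin n → ℕ → ℝ) :
    ∑ i : Finset (Fin n) × Option (Fin n), (-1 : ℝ) ^ i.1.card * ∏ j, w j (ex i j) =
      ∏ j, (w j 0 - w j 1) +
      ∑ l : Fin n, ∏ j, (w j (if l = j then 1 else 0) - w j ((if l = j then 1 else 0) + 1)) := by
  rw [Fintype.sum_prod_type_right, Fintype.sum_option]
  rw [alt_sum]
  congr 1
  apply Finset.sum_congr rfl
  intro l _
  rw [alt_sum]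
  simp

theorem ex_sum {n : ℕ} (i : Finset (Fin n) × Option (Fin n)) :
    ∑ j, ex i j = i.1.card + (if i.2.isSome then 1 else 0) := by
  unfold ex
  rw [Finset.sum_add_distrib, add_comm]
  congr 1
  · simp
  · rcases i with ⟨U, _ | l⟩ <;> simp

/-- degree one terms cancel. -/
theorem alt_split {n : ℕ} (F : (Fin n → ℕ) → ℝ) :
    ∑ i : Finset (Fin n) × Option (Fin n), (-1 : ℝ) ^ i.1.card * F (ex i) =
      F 0 + ∑ i : Finset (Fin n) × Option (Fin n),
        if 2 ≤ ∑ j, ex i j then (-1 : ℝ) ^ i.1.card * F (ex i) else 0 := by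
  have h1 : ∀ i : Finset (Fin n) × Option (Fin n), (-1 : ℝ) ^ i.1.card * F (ex i) =
      (if 2 ≤ ∑ j, ex i j then (-1 : ℝ) ^ i.1.card * F (ex i) else 0) +
      (if ∑ j, ex i j < 2 then (-1 : ℝ) ^ i.1.card * F (ex i) else 0) := by
    intro i
    split_ifs <;> first | omega | simp
  rw [Finset.sum_congr rfl (fun i _ => h1 i), Finset.sum_add_distrib, add_comm]
  congr 1
  rw [Fintype.sum_prod_type_right, Fintype.sum_option]
  simp only [ex_sum]
  have e1 : ∑ U : Finset (Fin n), (if U.card + (if (none : Option (Fin n)).isSome then 1 else 0) < 2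
      then (-1 : ℝ) ^ U.card * F (ex (U, none)) else 0) =
      F 0 - ∑ l : Fin n, F (ex ({l}, none)) := by
    have hsub : (Finset.univ : Finset (Finset (Fin n))).filter (fun U => U.card + (if (none : Option (Fin n)).isSome then 1 else 0) < 2)
        = insert ∅ (Finset.univ.image (fun l : Fin n => ({l} : Finset (Fin n)))) := by
      ext U
      simp only [Option.isSome_none, Bool.false_eq_true, if_false, add_zero, Finset.mem_filter, Finset.mem_univ, true_and,
        Finset.mem_insert, Finset.mem_image]
      rw [show U.card < 2 ↔ U.card = 0 ∨ U.card = 1 by omega, Finset.card_eq_zero, Finset.card_eq_one]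
      simp [eq_comm]
    rw [← Finset.sum_filter, hsub, Finset.sum_insert (by simp), Finset.sum_image (Finset.singleton_injective.injOn)]
    simp only [Finset.card_empty, pow_zero, one_mul, Finset.card_singleton, pow_one, neg_mul,
      Finset.sum_neg_distrib, ← sub_eq_add_neg]
    congr 2
  have e2 : ∀ l : Fin n, ∑ U : Finset (Fin n), (if U.card + (if (some l).isSome then 1 else 0) < 2
      then (-1 : ℝ) ^ U.card * F (ex (U, some l)) else 0) = F (ex ({l}, none)) := by
    intro l
    rw [Finset.sum_eq_single ∅]
    · simp
      congr 1; ext j; simp [ex, eq_comm]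
    · intro U _ hU
      rw [if_neg]
      have : 0 < U.card := Finset.card_pos.2 (Finset.nonempty_iff_ne_empty.2 hU)
      simp; omega
    · simp
  rw [e1, Finset.sum_congr rfl (fun l _ => e2 l)]
  ring

theorem gS_indicator {n : ℕ} {p : ℕ} (hp : p.Prime) {a : Fin n → ℕ} (ha : ∀ j, 0 < a j) :
    (if ¬ p ^ 2 ∣ ∏ j, a j then (1 : ℝ) else 0) =
    ∑ i : Finset (Fin n) × Option (Fin n), (-1 : ℝ) ^ i.1.card *
      (if ∀ j, p ^ ex i j ∣ a j then 1 else 0) := by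
  have hfac : ∀ (e : ℕ) j, p ^ e ∣ a j ↔ e ≤ (a j).factorization p := fun e j =>
    hp.pow_dvd_iff_le_factorization (ha j).ne'
  have h1 : ∀ i : Finset (Fin n) × Option (Fin n),
      (if ∀ j, p ^ ex i j ∣ a j then (1 : ℝ) else 0) = ∏ j, if ex i j ≤ (a j).factorization p then 1 else 0 := by
    intro i
    simp only [hfac]
    rw [Finset.prod_ite_zero]; simp
  simp only [h1]
  rw [alt_sum_all (fun j e => if e ≤ (a j).factorization p then (1 : ℝ) else 0)]
  have h2 : ∀ d e : ℕ, ((if e ≤ d then (1 : ℝ) else 0) - if e + 1 ≤ d then 1 else 0) =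
      if d = e then 1 else 0 := by
    intro d e
    split_ifs <;> first | omega | norm_num
  have h2' := fun d => h2 d 0
  simp only [zero_add] at h2'
  simp only [h2, h2', Finset.prod_ite_zero, Finset.prod_const_one]
  have h3 : (p ^ 2 ∣ ∏ j, a j) ↔ 2 ≤ ∑ j, (a j).factorization p := by
    rw [hp.pow_dvd_iff_le_factorization (Finset.prod_ne_zero_iff.2 fun j _ => (ha j).ne'),
      Nat.factorization_prod fun j _ => (ha j).ne', Finsupp.finsetSum_apply]
  simp only [h3, Finset.mem_univ, true_imp_iff]
  by_cases hz : ∀ j, (a j).factorization p = 0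
  · have : ¬ 2 ≤ ∑ j, (a j).factorization p := by simp [hz]
    rw [if_pos this, if_pos hz, Finset.sum_eq_zero]; · simp
    intro l _
    rw [if_neg]
    intro hh
    have := hh l
    rw [hz l] at this; simp at this
  · rw [if_neg hz, zero_add]
    push Not at hz
    obtain ⟨l, hl⟩ := hz
    refine Eq.trans ?_ (Finset.sum_eq_single l ?_ ?_).symm
    · congr 1
      rw [eq_iff_iff]
      constructor
      · intro hh j
        have hs := Finset.add_sum_erase Finset.univ (fun j => (a j).factorization p) (Finset.mem_univ l)
        split_ifs with hjl
        · subst hjl; omega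
        · have : (a j).factorization p ≤ ∑ i ∈ Finset.univ.erase l, (a i).factorization p :=
            Finset.single_le_sum (f := fun i => (a i).factorization p) (fun _ _ => Nat.zero_le _)
              (by simp; exact fun h => hjl h.symm)
          omega
      · intro hh
        rw [Finset.sum_congr rfl (fun j _ => hh j)]
        simp
    · intro m _ hm
      rw [if_neg]
      intro hh
      have := hh l
      rw [if_neg hm] at this
      exact hl this
    · simp

theorem gS_mul {n : ℕ} {S : Finset ℕ} (hS : ∀ q ∈ S, q.Prime) {p : ℕ} (hp : p.Prime) (hpS : p ∉ S)
    (e a : Fin n → ℕ) : gS S (fun j => p ^ e j * a j) = gS S a := by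
  unfold gS
  congr 1
  rw [eq_iff_iff]
  refine forall₂_congr fun q hq => not_congr ?_
  rw [Finset.prod_mul_distrib]
  have hcop : Nat.Coprime (q ^ 2) (∏ j, p ^ e j) := by
    apply Nat.Coprime.prod_right
    intro j _
    apply Nat.Coprime.pow
    rw [Nat.coprime_primes (hS q hq) hp]
    rintro rfl; exact hpS hq
  exact hcop.dvd_mul_left

theorem R_shift {k n : ℕ} {c : Fin n → ℕ} {S : Finset ℕ} (hS : ∀ q ∈ S, q.Prime)
    {p : ℕ} (hp : p.Prime) (hpS : p ∉ S) (e : Fin n → ℕ) (x y : ℝ) :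
    R k c (fun a => (if ∀ j, p ^ e j ∣ a j then 1 else 0) * gS S a) x y =
      (1 / (p : ℝ) ^ (∑ j, e j)) * R k c (gS S) (x - Real.log p * ∑ j, (c j : ℝ) * e j)
        (y - Real.log p * ∑ j, ((k : ℝ) - c j) * e j) := by
  have hp0 : (p : ℝ) ≠ 0 := by exact_mod_cast hp.ne_zero
  have hinj : Function.Injective (fun (a : Fin n → ℕ) (j : Fin n) => p ^ e j * a j) := by
    intro a b hab
    ext j
    have := congrFun hab j
    exact Nat.eq_of_mul_eq_mul_left (pow_pos hp.pos _) this
  unfold R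
  rw [← hinj.tsum_eq, ← tsum_mul_left]
  · apply tsum_congr
    intro a
    unfold tm
    have hA : Adm k c (fun j => p ^ e j * a j) x y ↔
        Adm k c a (x - Real.log p * ∑ j, (c j : ℝ) * e j)
        (y - Real.log p * ∑ j, ((k : ℝ) - c j) * e j) := by
      unfold Adm
      have h1 : (∀ j, 0 < p ^ e j * a j) ↔ ∀ j, 0 < a j :=
        forall_congr' fun j => by
          rw [Nat.mul_pos_iff_of_pos_left (pow_pos hp.pos _)]
      rw [h1]
      refine and_congr_right fun ha => ?_
      have h2 : ∀ d : Fin n → ℝ, ∑ j, d j * Real.log ((p ^ e j * a j : ℕ) : ℝ) =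
          ∑ j, d j * Real.log (a j) + Real.log p * ∑ j, d j * e j := by
        intro d
        rw [Finset.mul_sum, ← Finset.sum_add_distrib]
        apply Finset.sum_congr rfl
        intro j _
        have : (a j : ℝ) ≠ 0 := by exact_mod_cast (ha j).ne'
        push_cast
        rw [Real.log_mul (pow_ne_zero _ hp0) this, Real.log_pow]
        ring
      rw [h2 (fun j => (c j : ℝ)), h2 (fun j => (k : ℝ) - c j), le_sub_iff_add_le, le_sub_iff_add_le]
    simp only [hA]
    by_cases h : Adm k c a (x - Real.log p * ∑ j, (c j : ℝ) * e j)
        (y - Real.log p * ∑ j, ((k : ℝ) - c j) * e j)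
    · rw [if_pos h, if_pos h, gS_mul hS hp hpS]
      rw [if_pos (fun j => Dvd.intro _ rfl)]
      push_cast
      simp only [one_div, mul_inv, Finset.prod_mul_distrib, Finset.prod_inv_distrib, one_mul]
      rw [Finset.prod_pow_eq_pow_sum]
      ring
    · rw [if_neg h, if_neg h, mul_zero]
  · intro a ha
    rw [Function.mem_support] at ha
    unfold tm at ha
    by_cases hd : ∀ j, p ^ e j ∣ a j
    · refine ⟨fun j => a j / p ^ e j, ?_⟩
      ext j
      exact Nat.mul_div_cancel' (hd j)
    · simp [hd] at ha

theorem R_insert {k n : ℕ} {c : Fin n → ℕ} (h : Good k c) {S : Finset ℕ} (hS : ∀ q ∈ S, q.Prime)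
    {p : ℕ} (hp : p.Prime) (hpS : p ∉ S) (x y : ℝ) :
    R k c (gS (insert p S)) x y = ∑ i : Finset (Fin n) × Option (Fin n), (-1 : ℝ) ^ i.1.card *
      ((1 / (p : ℝ) ^ (∑ j, ex i j)) * R k c (gS S) (x - Real.log p * ∑ j, (c j : ℝ) * ex i j)
        (y - Real.log p * ∑ j, ((k : ℝ) - c j) * ex i j)) := by
  simp only [← R_shift hS hp hpS]
  unfold R
  simp only [← tsum_mul_left]
  rw [← Summable.tsum_finsetSum]
  swap
  · intro i _
    exact (tm_summable h _ x y).mul_left _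
  apply tsum_congr
  intro a
  unfold tm
  split_ifs with hA
  · have : gS (insert p S) a = (if ¬ p ^ 2 ∣ ∏ j, a j then (1 : ℝ) else 0) * gS S a := by
      unfold gS
      simp only [Finset.forall_mem_insert, ite_and, ite_mul, one_mul, zero_mul]
    rw [this, gS_indicator hp hA.1, Finset.sum_mul, Finset.sum_mul]
    apply Finset.sum_congr rfl
    intro i _
    ring
  · simp

end SkAux

namespace SkAux

noncomputable def qp (N p : ℕ) : ℝ := (1 - 1 / (p : ℝ)) ^ N * (1 + N / (p : ℝ))

theorem qp_eq (n p : ℕ) (hp : 0 < p) :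
    ∑ i : Finset (Fin n) × Option (Fin n), (-1 : ℝ) ^ i.1.card * (1 / (p : ℝ) ^ (∑ j, ex i j)) = qp n p := by
  have hp' : (p : ℝ) ≠ 0 := by exact_mod_cast hp.ne'
  have := alt_sum_all (n := n) (fun _ e => 1 / (p : ℝ) ^ e)
  simp only [Finset.prod_div_distrib, Finset.prod_const_one, Finset.prod_pow_eq_pow_sum] at this
  rw [this]
  have h : ∀ e : ℕ, 1 / (p : ℝ) ^ e - 1 / (p : ℝ) ^ (e + 1) = (1 / (p : ℝ) ^ e) * (1 - 1 / p) := by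
    intro e; rw [pow_succ]; field_simp
  simp only [h, Finset.prod_mul_distrib, Finset.prod_div_distrib, Finset.prod_const_one,
    Finset.prod_pow_eq_pow_sum]
  simp [qp]
  ring

theorem qp_nonneg (n p : ℕ) (hp : 0 < p) : 0 ≤ qp n p := by
  have : (1 : ℝ) / p ≤ 1 := by
    rw [div_le_one (by exact_mod_cast hp)]; exact_mod_cast hp
  unfold qp
  have : 0 ≤ 1 - (1 : ℝ) / p := by linarith
  positivity

theorem qp_le_one (n p : ℕ) (hp : 0 < p) : qp n p ≤ 1 := by
  have h1 : (1 : ℝ) / p ≤ 1 := by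
    rw [div_le_one (by exact_mod_cast hp)]; exact_mod_cast hp
  have h0 : 0 ≤ (1 : ℝ) / p := by positivity
  unfold qp
  set t := (1 : ℝ) / p
  have h2 : 1 + (n : ℝ) / p ≤ (1 + t) ^ n := by
    have := one_add_mul_le_pow (a := t) (by linarith) n
    refine le_trans (le_of_eq ?_) this
    simp only [t]; ring
  calc (1 - t) ^ n * (1 + n / p) ≤ (1 - t) ^ n * (1 + t) ^ n := by
        apply mul_le_mul_of_nonneg_left h2 (pow_nonneg (by linarith) _)
    _ = (1 - t ^ 2) ^ n := by rw [← mul_pow]; ring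
    _ ≤ 1 := pow_le_one₀ (by nlinarith) (by nlinarith)

theorem le_qp (n p : ℕ) (hp : 0 < p) : 1 - (n : ℝ) ^ 2 / (p : ℝ) ^ 2 ≤ qp n p := by
  have h1 : (1 : ℝ) / p ≤ 1 := by
    rw [div_le_one (by exact_mod_cast hp)]; exact_mod_cast hp
  have h0 : 0 ≤ (1 : ℝ) / p := by positivity
  have h2 := one_add_mul_le_pow (a := - ((1 : ℝ) / p)) (by linarith) n
  unfold qp
  calc 1 - (n : ℝ) ^ 2 / (p : ℝ) ^ 2 = (1 + n * -((1 : ℝ) / p)) * (1 + n / p) := by ring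
    _ ≤ _ := by
      rw [← sub_eq_add_neg] at h2
      rw [sub_eq_add_neg 1]
      apply mul_le_mul_of_nonneg_right _ (by positivity)
      rw [← sub_eq_add_neg 1 ((1 : ℝ) / p)]; exact h2

noncomputable def bp (k n p : ℕ) : ℝ :=
  (Fintype.card (Finset (Fin (n + 1)) × Option (Fin (n + 1)))) * (1 / (p : ℝ) ^ 2) *
    (1 + k * (n + 2) * Real.log p)

theorem bp_nonneg (k n p : ℕ) : 0 ≤ bp k n p := by
  have := Real.log_natCast_nonneg p
  unfold bp; positivity

theorem bp_summable (k n : ℕ) : Summable (bp k n) := by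
  unfold bp
  simp only [mul_assoc]
  apply Summable.mul_left
  have h : Summable (fun p : ℕ => (1 + 2 * (k * (n + 2) : ℝ)) * ((p : ℝ) ^ (3 / 2 : ℝ))⁻¹) :=
    (Real.summable_nat_rpow_inv.2 (by norm_num)).mul_left _
  refine Summable.of_nonneg_of_le ?_ ?_ h
  · intro p
    have := Real.log_natCast_nonneg p
    positivity
  · intro p
    rcases Nat.eq_zero_or_pos p with rfl | hp
    · simp
    have hp' : (1 : ℝ) ≤ p := by exact_mod_cast hp
    have hl := Real.log_le_rpow_div (x := p) (by positivity) (ε := 1 / 2) (by norm_num)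
    have hs1 : (1 : ℝ) ≤ (p : ℝ) ^ (1 / 2 : ℝ) := Real.one_le_rpow hp' (by norm_num)
    have e : ((p : ℝ) ^ (3 / 2 : ℝ))⁻¹ = (p : ℝ) ^ (1 / 2 : ℝ) * (1 / (p : ℝ) ^ 2) := by
      rw [← Real.rpow_neg (by positivity), one_div ((p : ℝ) ^ 2), ← Real.rpow_natCast, ← Real.rpow_neg (by positivity),
        ← Real.rpow_add (by positivity)]
      norm_num
    rw [e, mul_comm, ← mul_assoc (1 + 2 * _)]
    apply mul_le_mul_of_nonneg_right _ (by positivity)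
    have : (k : ℝ) * ((n + 2) * Real.log p) ≤ k * ((n + 2) * (2 * (p : ℝ) ^ (1 / 2 : ℝ))) := by
      gcongr
      refine hl.trans (le_of_eq ?_)
      ring
    nlinarith

theorem ex_deg {n : ℕ} (i : Finset (Fin n) × Option (Fin n)) : ∑ j, ex i j ≤ n + 1 := by
  rw [ex_sum]
  have := Finset.card_le_univ i.1
  simp at this
  split_ifs <;> omega

theorem R_est_step {k n : ℕ} {c : Fin (n + 1) → ℕ} (h : Good k c) {S : Finset ℕ}
    (hS : ∀ q ∈ S, q.Prime) {p : ℕ} (hp : p.Prime) (hpS : p ∉ S) {L E P : ℝ} (hL : 0 ≤ L)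
    (hE : 0 ≤ E) (hP0 : 0 ≤ P) (hP1 : P ≤ 1)
    (ih : ∀ x y, x ≤ L → |R k c (gS S) x y - P * V k (n + 1) c x y| ≤ E * (1 + L) ^ n)
    (x y : ℝ) (hx : x ≤ L) :
    |R k c (gS (insert p S)) x y - P * qp (n + 1) p * V k (n + 1) c x y| ≤
      (E + (Fintype.card (Finset (Fin (n + 1)) × Option (Fin (n + 1)))) * (1 / (p : ℝ) ^ 2) *
    (E + k * (n + 2) * Real.log p)) * (1 + L) ^ n := by
  have hp1 : (1 : ℝ) ≤ p := by exact_mod_cast hp.pos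
  have hlog := Real.log_natCast_nonneg p
  rw [R_insert h hS hp hpS, ← qp_eq _ _ hp.pos]
  rw [alt_split (fun e : Fin (n + 1) → ℕ => ((1 / (p : ℝ) ^ (∑ j, e j)) * R k c (gS S) (x - Real.log p * ∑ j, (c j : ℝ) * e j)
        (y - Real.log p * ∑ j, ((k : ℝ) - c j) * e j)))]
  rw [alt_split (fun e : Fin (n + 1) → ℕ => (1 / (p : ℝ) ^ (∑ j, e j)))]
  simp only [Pi.zero_apply, Finset.sum_const_zero, pow_zero, Nat.cast_zero, mul_zero, sub_zero, div_one, one_mul]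
  rw [mul_add, add_mul, mul_one, add_sub_add_comm, Finset.mul_sum, Finset.sum_mul, ← Finset.sum_sub_distrib,
    add_mul]
  refine (abs_add_le _ _).trans (add_le_add (ih x y hx) ?_)
  refine (Finset.abs_sum_le_sum_abs _ _).trans ?_
  refine (Finset.sum_le_card_nsmul _ _ ((1 / (p : ℝ) ^ 2) *
    (E + k * (n + 2) * Real.log p) * (1 + L) ^ n) ?_).trans (le_of_eq ?_)
  · intro i _
    show |(if 2 ≤ ∑ j, ex i j then (-1 : ℝ) ^ i.1.card * ((1 / (p : ℝ) ^ (∑ j, ex i j)) *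
        R k c (gS S) (x - Real.log p * ∑ j, (c j : ℝ) * ex i j)
        (y - Real.log p * ∑ j, ((k : ℝ) - c j) * ex i j)) else 0) -
        P * (if 2 ≤ ∑ j, ex i j then (-1 : ℝ) ^ i.1.card * (1 / (p : ℝ) ^ (∑ j, ex i j)) else 0) *
          V k (n + 1) c x y| ≤ _
    split_ifs with hd
    · set X := x - Real.log p * ∑ j, (c j : ℝ) * ex i j
      set Y := y - Real.log p * ∑ j, ((k : ℝ) - c j) * ex i j
      have hs : 0 ≤ Real.log p * ∑ j, (c j : ℝ) * ex i j := by positivity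
      have hs' : 0 ≤ Real.log p * ∑ j, ((k : ℝ) - c j) * ex i j := by
        apply mul_nonneg hlog
        apply Finset.sum_nonneg
        intro j _
        have := h.one_le' j
        exact mul_nonneg (by linarith) (by positivity)
      have hss : Real.log p * ∑ j, (c j : ℝ) * ex i j + Real.log p * ∑ j, ((k : ℝ) - c j) * ex i j ≤
          k * (n + 2) * Real.log p := by
        rw [← mul_add, ← Finset.sum_add_distrib]
        have e : ∑ j, ((c j : ℝ) * ex i j + ((k : ℝ) - c j) * ex i j) = k * ((∑ j, ex i j : ℕ) : ℝ) := by
          push_cast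
          rw [Finset.mul_sum]
          apply Finset.sum_congr rfl
          intro j _; ring
        rw [e]
        have : ((∑ j, ex i j : ℕ) : ℝ) ≤ n + 2 := by
          have := ex_deg i
          have : ∑ j, ex i j ≤ n + 2 := by omega
          exact_mod_cast this
        rw [mul_comm]
        gcongr
      have hA := ih X Y (by simp only [X]; linarith)
      have hB := V_lip h (x := x) (y := y) hL hx hs hs'
      have hB0 : V k (n + 1) c X Y ≤ V k (n + 1) c x y := V_mono h (by simp only [X]; linarith) (by simp only [Y]; linarith)
      have hC : |R k c (gS S) X Y - P * V k (n + 1) c x y| ≤ (E + k * (n + 2) * Real.log p) * (1 + L) ^ n := by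
        calc _ = |(R k c (gS S) X Y - P * V k (n + 1) c X Y) + (- (P * (V k (n + 1) c x y - V k (n + 1) c X Y)))| := by
              congr 1; ring
          _ ≤ E * (1 + L) ^ n + (k * (n + 2) * Real.log p) * (1 + L) ^ n := by
              refine (abs_add_le _ _).trans (add_le_add hA ?_)
              rw [abs_neg, abs_of_nonneg (mul_nonneg hP0 (by linarith))]
              calc _ ≤ 1 * (V k (n + 1) c x y - V k (n + 1) c X Y) := by
                    apply mul_le_mul_of_nonneg_right hP1 (by linarith)
                _ ≤ _ := by
                    rw [one_mul]
                    refine hB.trans ?_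
                    gcongr
          _ = _ := by ring
      have e : (-1 : ℝ) ^ i.1.card * ((1 / (p : ℝ) ^ (∑ j, ex i j)) * R k c (gS S) X Y) -
          P * ((-1 : ℝ) ^ i.1.card * (1 / (p : ℝ) ^ (∑ j, ex i j))) * V k (n + 1) c x y =
          (-1 : ℝ) ^ i.1.card * ((1 / (p : ℝ) ^ (∑ j, ex i j)) * (R k c (gS S) X Y - P * V k (n + 1) c x y)) := by ring
      rw [e, abs_mul, abs_pow, abs_neg, abs_one, one_pow, one_mul, abs_mul, abs_of_nonneg (by positivity), mul_assoc]
      apply mul_le_mul _ hC (abs_nonneg _) (by positivity)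
      apply one_div_le_one_div_of_le (by positivity)
      exact pow_le_pow_right₀ hp1 hd
    · simp; positivity
  · rw [nsmul_eq_mul, Finset.card_univ]
    ring

theorem R_est {k n : ℕ} {c : Fin (n + 1) → ℕ} (h : Good k c) {L : ℝ} (hL : 0 ≤ L) (S : Finset ℕ)
    (hS : ∀ q ∈ S, q.Prime) (x y : ℝ) (hx : x ≤ L) :
    |R k c (gS S) x y - (∏ p ∈ S, qp (n + 1) p) * V k (n + 1) c x y| ≤
      ((n + 2) * ∏ p ∈ S, (1 + bp k n p) - 1) * (1 + L) ^ n := by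
  induction S using Finset.induction_on generalizing x y with
  | empty =>
    have e : (gS ∅ : (Fin (n + 1) → ℕ) → ℝ) = fun _ => 1 := by ext a; simp [gS]
    have := R_V h hL hx (y := y)
    rw [e, Finset.prod_empty, Finset.prod_empty, one_mul, abs_of_nonneg this.1]
    refine this.2.trans (le_of_eq ?_)
    push_cast; ring
  | insert p S hpS ih =>
    have hS' : ∀ q ∈ S, q.Prime := fun q hq => hS q (Finset.mem_insert_of_mem hq)
    have hp := hS p (Finset.mem_insert_self _ _)
    have hprod : (1 : ℝ) ≤ ∏ p ∈ S, (1 + bp k n p) := by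
      calc (1 : ℝ) = ∏ p ∈ S, (1 : ℝ) := by simp
        _ ≤ _ := Finset.prod_le_prod (by simp) (fun q _ => by have := bp_nonneg k n q; linarith)
    have := R_est_step h hS' hp hpS hL (E := (n + 2) * ∏ p ∈ S, (1 + bp k n p) - 1)
      (P := ∏ p ∈ S, qp (n + 1) p) (by nlinarith [(Nat.cast_nonneg n : (0:ℝ) ≤ n)])
      (Finset.prod_nonneg fun q hq => qp_nonneg _ _ (hS' q hq).pos)
      (Finset.prod_le_one (fun q hq => qp_nonneg _ _ (hS' q hq).pos) (fun q hq => qp_le_one _ _ (hS' q hq).pos))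
      (fun x y hx => ih hS' x y hx) x y hx
    rw [Finset.prod_insert hpS, Finset.prod_insert hpS, mul_comm (qp _ _)]
    refine this.trans ?_
    apply mul_le_mul_of_nonneg_right _ (by positivity)
    have hlog := Real.log_natCast_nonneg p
    set Q := ∏ p ∈ S, (1 + bp k n p)
    unfold bp
    set I : ℝ := (Fintype.card (Finset (Fin (n + 1)) × Option (Fin (n + 1)))) * (1 / (p : ℝ) ^ 2)
    have hI : 0 ≤ I := by positivity
    set l := (k : ℝ) * (n + 2) * Real.log p
    have hl : 0 ≤ l := by positivity
    have hQ2 : 1 ≤ (n + 2) * Q := by nlinarith [(Nat.cast_nonneg n : (0:ℝ) ≤ n)]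
    have : I * ((n + 2) * Q - 1 + l) ≤ I * (((n + 2) * Q) * (1 + l)) := by
      apply mul_le_mul_of_nonneg_left _ hI
      nlinarith
    nlinarith

theorem R_est_unif {k n : ℕ} {c : Fin (n + 1) → ℕ} (h : Good k c) : ∃ C : ℝ, ∀ (L : ℝ) (S : Finset ℕ)
    (x y : ℝ), 0 ≤ L → (∀ q ∈ S, q.Prime) → x ≤ L →
    |R k c (gS S) x y - (∏ p ∈ S, qp (n + 1) p) * V k (n + 1) c x y| ≤ C * (1 + L) ^ n := by
  refine ⟨(n + 2) * Real.exp (∑' p, bp k n p), fun L S x y hL hS hx => (R_est h hL S hS x y hx).trans ?_⟩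
  apply mul_le_mul_of_nonneg_right _ (by positivity)
  have : ∏ p ∈ S, (1 + bp k n p) ≤ Real.exp (∑' p, bp k n p) := by
    calc _ ≤ ∏ p ∈ S, Real.exp (bp k n p) := by
          apply Finset.prod_le_prod
          · intro p _; have := bp_nonneg k n p; linarith
          · intro p _; rw [add_comm]; exact Real.add_one_le_exp _
      _ = Real.exp (∑ p ∈ S, bp k n p) := (Real.exp_sum _ _).symm
      _ ≤ _ := Real.exp_le_exp.2 ((bp_summable k n).sum_le_tsum _ (fun p _ => bp_nonneg k n p))
  have h2 : (0:ℝ) ≤ n + 2 := by positivity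
  nlinarith [mul_le_mul_of_nonneg_left this h2]

theorem qp_hasProd (n : ℕ) : ∃ P : ℝ, HasProd (fun p : Nat.Primes => qp n p) P := by
  have hs : Summable (fun p : Nat.Primes => qp n p - 1) := by
    have h : Summable (fun p : ℕ => (n : ℝ) ^ 2 * ((p : ℝ) ^ 2)⁻¹) :=
      (Real.summable_nat_pow_inv.2 (by norm_num)).mul_left _
    have h' := h.comp_injective (Nat.Primes.coe_nat_injective)
    refine Summable.of_norm_bounded h' ?_
    intro p
    rw [Real.norm_eq_abs, abs_le]
    have h1 := le_qp n p p.2.pos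
    have h2 := qp_le_one n p p.2.pos
    simp only [Function.comp]
    rw [div_eq_mul_inv] at h1
    have : 0 ≤ (n : ℝ) ^ 2 * (((p : ℕ) : ℝ) ^ 2)⁻¹ := by positivity
    constructor <;> linarith
  have := Real.multipliable_one_add_of_summable hs
  simp only [add_sub_cancel] at this
  exact ⟨_, this.hasProd⟩

def primesEmb : Nat.Primes ↪ ℕ := ⟨fun p => (p : ℕ), Nat.Primes.coe_nat_injective⟩

/-- squarefree version -/
theorem R_sqf {k n : ℕ} {c : Fin (n + 1) → ℕ} (h : Good k c) {P : ℝ}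
    (hP : HasProd (fun p : Nat.Primes => qp (n + 1) p) P) : ∃ C : ℝ, ∀ (L : ℝ), 0 ≤ L →
    |R k c (fun a => if Squarefree (∏ j, a j) then 1 else 0) L L - P * V k (n + 1) c L L| ≤ C * (1 + L) ^ n := by
  obtain ⟨C, hC⟩ := R_est_unif h
  refine ⟨C, fun L hL => ?_⟩
  set N := ⌊Real.exp L⌋₊
  have hev : ∀ᶠ T : Finset Nat.Primes in atTop,
      |R k c (fun a => if Squarefree (∏ j, a j) then 1 else 0) L L - (∏ p ∈ T, qp (n + 1) p) * V k (n + 1) c L L| ≤ C * (1 + L) ^ n := by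
    have hfin : {p : Nat.Primes | (p : ℕ) ≤ N ^ (n + 1)}.Finite := by
      apply Set.Finite.preimage (Nat.Primes.coe_nat_injective.injOn) (Set.finite_Iic (N ^ (n + 1)))
    filter_upwards [eventually_ge_atTop hfin.toFinset] with T hT
    have := hC L (T.map primesEmb) L L hL (by
      intro q hq
      rw [Finset.mem_map] at hq
      obtain ⟨q, _, rfl⟩ := hq
      exact q.2) le_rfl
    rw [Finset.prod_map] at this
    have e : R k c (gS (T.map primesEmb)) L L =
        R k c (fun a => if Squarefree (∏ j, a j) then 1 else 0) L L := by
      rw [R_eq_sum h _ L L le_rfl, R_eq_sum h _ L L le_rfl]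
      apply Finset.sum_congr rfl
      intro a ha
      rw [Fintype.mem_piFinset] at ha
      simp only [Finset.mem_Icc] at ha
      unfold tm
      congr 2
      unfold gS
      congr 1
      rw [eq_iff_iff, Nat.squarefree_iff_prime_squarefree]
      constructor
      · intro hh p hp hd
        have hpos : 0 < ∏ j, a j := Finset.prod_pos fun j _ => (ha j).1
        have hle : p ≤ N ^ (n + 1) := by
          calc p ≤ ∏ j, a j := Nat.le_of_dvd hpos ((Dvd.intro _ rfl).trans hd)
            _ ≤ ∏ j : Fin (n + 1), N := Finset.prod_le_prod' fun j _ => (ha j).2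
            _ = _ := by simp
        refine hh p ?_ (by rwa [sq])
        rw [Finset.mem_map]
        exact ⟨⟨p, hp⟩, hT (hfin.mem_toFinset.2 hle), rfl⟩
      · intro hh p hp
        rw [Finset.mem_map] at hp
        obtain ⟨q, _, rfl⟩ := hp
        rw [sq]; exact hh _ q.2
    rw [e] at this
    exact this
  have ht : Tendsto (fun T : Finset Nat.Primes => |R k c (fun a => if Squarefree (∏ j, a j) then 1 else 0) L L - (∏ p ∈ T, qp (n + 1) p) * V k (n + 1) c L L|) atTop
      (nhds |R k c (fun a => if Squarefree (∏ j, a j) then 1 else 0) L L - P * V k (n + 1) c L L|) :=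
    (tendsto_const_nhds.sub (Tendsto.mul_const _ hP)).abs
  exact le_of_tendsto ht hev

end SkAux

namespace SkAux

def AA {N : ℕ} (a : Fin N → ℕ) : ℕ := ∏ j, a j ^ ((j : ℕ) + 1)
def BB {N : ℕ} (a : Fin N → ℕ) : ℕ := ∏ j, a j ^ (N - (j : ℕ))

theorem AA_mul_BB {N : ℕ} (a : Fin N → ℕ) : AA a * BB a = (∏ j, a j) ^ (N + 1) := by
  unfold AA BB
  rw [← Finset.prod_mul_distrib, ← Finset.prod_pow]
  apply Finset.prod_congr rfl
  intro j _
  rw [← pow_add]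
  congr 1
  have := j.2
  omega

theorem pos_of_sqf {N : ℕ} {a : Fin N → ℕ} (ha : Squarefree (∏ j, a j)) (j : Fin N) : 0 < a j := by
  have := ha.ne_zero
  rw [Finset.prod_ne_zero_iff] at this
  exact Nat.pos_of_ne_zero (this j (Finset.mem_univ j))

theorem AA_pos {N : ℕ} {a : Fin N → ℕ} (ha : ∀ j, 0 < a j) : 0 < AA a :=
  Finset.prod_pos fun j _ => pow_pos (ha j) _

theorem BB_pos {N : ℕ} {a : Fin N → ℕ} (ha : ∀ j, 0 < a j) : 0 < BB a :=
  Finset.prod_pos fun j _ => pow_pos (ha j) _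

theorem sum_fac_le {N : ℕ} {a : Fin N → ℕ} (ha : Squarefree (∏ j, a j)) (p : ℕ) :
    ∑ j, (a j).factorization p ≤ 1 := by
  have := ha.natFactorization_le_one p
  rwa [Nat.factorization_prod fun j _ => (pos_of_sqf ha j).ne', Finsupp.finsetSum_apply] at this

theorem sparse {N : ℕ} {f : Fin N → ℕ} (hf : ∑ j, f j ≤ 1) :
    (∀ j, f j = 0) ∨ ∃ l, ∀ j, f j = if j = l then 1 else 0 := by
  by_cases h : ∀ j, f j = 0
  · exact Or.inl h
  · right
    push Not at h
    obtain ⟨l, hl⟩ := h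
    refine ⟨l, fun j => ?_⟩
    have hs := Finset.add_sum_erase Finset.univ f (Finset.mem_univ l)
    split_ifs with hjl
    · subst hjl; omega
    · have : f j ≤ ∑ i ∈ Finset.univ.erase l, f i :=
        Finset.single_le_sum (f := f) (fun _ _ => Nat.zero_le _) (by simp [hjl])
      omega

theorem sparse_sum {N : ℕ} {f : Fin N → ℕ} (hf : ∑ j, f j ≤ 1) (w : Fin N → ℕ) (hw : ∀ j, w j < N + 1) :
    ∑ j, w j * f j < N + 1 := by
  rcases sparse hf with h | ⟨l, h⟩
  · simp [h]
  · simp [h, hw]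

theorem sparse_inj {N : ℕ} {f g : Fin N → ℕ} (hf : ∑ j, f j ≤ 1) (hg : ∑ j, g j ≤ 1)
    (h : ∑ j : Fin N, ((j : ℕ) + 1) * f j = ∑ j : Fin N, ((j : ℕ) + 1) * g j) : f = g := by
  rcases sparse hf with h1 | ⟨l, h1⟩ <;> rcases sparse hg with h2 | ⟨m, h2⟩
  · ext j; rw [h1, h2]
  · simp [h1, h2] at h
  · simp [h1, h2] at h
  · simp [h1, h2] at h
    have : l = m := Fin.ext h
    subst this
    ext j; rw [h1, h2]

theorem fac_prod_pow {N : ℕ} {a : Fin N → ℕ} (ha : ∀ j, 0 < a j) (w : Fin N → ℕ) (p : ℕ) :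
    (∏ j, a j ^ w j).factorization p = ∑ j, w j * (a j).factorization p := by
  rw [Nat.factorization_prod fun j _ => (pow_pos (ha j) _).ne', Finsupp.finsetSum_apply]
  simp

theorem decomp_inj {N : ℕ} {a b : Fin N → ℕ} (ha : Squarefree (∏ j, a j)) (hb : Squarefree (∏ j, b j))
    {u v : ℕ} (hu : 0 < u) (hv : 0 < v) (h : u ^ (N + 1) * AA a = v ^ (N + 1) * AA b) :
    u = v ∧ a = b := by
  have pa := pos_of_sqf ha
  have pb := pos_of_sqf hb
  have key : ∀ p, (N + 1) * u.factorization p + ∑ j : Fin N, ((j : ℕ) + 1) * (a j).factorization p =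
      (N + 1) * v.factorization p + ∑ j : Fin N, ((j : ℕ) + 1) * (b j).factorization p := by
    intro p
    have := congrArg (fun x => x.factorization p) h
    try simp only at this
    rw [Nat.factorization_mul (pow_pos hu _).ne' (AA_pos pa).ne', Nat.factorization_mul (pow_pos hv _).ne' (AA_pos pb).ne'] at this
    unfold AA at this
    simp only [Finsupp.add_apply, fac_prod_pow pa, fac_prod_pow pb, Nat.factorization_pow, Finsupp.smul_apply, smul_eq_mul] at this
    exact this
  have la := fun p => sparse_sum (sum_fac_le ha p) (fun j => (j : ℕ) + 1) (fun j => by have := j.2; omega)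
  have lb := fun p => sparse_sum (sum_fac_le hb p) (fun j => (j : ℕ) + 1) (fun j => by have := j.2; omega)
  have huv : ∀ p, u.factorization p = v.factorization p := by
    intro p
    have := congrArg (fun x => x / (N + 1)) (key p)
    simp only [Nat.mul_add_div (Nat.succ_pos N), Nat.div_eq_of_lt (la p), Nat.div_eq_of_lt (lb p)] at this
    simpa using this
  refine ⟨Nat.eq_of_factorization_eq hu.ne' hv.ne' huv, ?_⟩
  ext j
  apply Nat.eq_of_factorization_eq (pa j).ne' (pb j).ne'
  intro p
  have h1 := key p
  rw [huv p] at h1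
  exact congrFun (sparse_inj (sum_fac_le ha p) (sum_fac_le hb p) (Nat.add_left_cancel h1)) j

theorem decomp_exists (N : ℕ) {x : ℕ} (hx : 0 < x) : ∃ (u : ℕ) (a : Fin N → ℕ), 0 < u ∧
    Squarefree (∏ j, a j) ∧ x = u ^ (N + 1) * AA a := by
  set r : ℕ → ℕ := fun p => x.factorization p % (N + 1)
  have hr : ∀ p, r p < N + 1 := fun p => Nat.mod_lt _ (Nat.succ_pos N)
  refine ⟨∏ p ∈ x.primeFactors, p ^ (x.factorization p / (N + 1)),
    fun j => ∏ p ∈ x.primeFactors, if r p = (j : ℕ) + 1 then p else 1, ?_, ?_, ?_⟩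
  · exact Finset.prod_pos fun p hp => pow_pos (Nat.prime_of_mem_primeFactors hp).pos _
  · rw [Finset.prod_comm]
    have hd : (∏ p ∈ x.primeFactors, ∏ j : Fin N, if r p = (j : ℕ) + 1 then p else 1) ∣
        ∏ p ∈ x.primeFactors, p := by
      apply Finset.prod_dvd_prod_of_dvd
      intro p _
      by_cases h0 : r p = 0
      · simp [h0]
      · rw [Finset.prod_eq_single (⟨r p - 1, by have := hr p; omega⟩ : Fin N)]
        · split_ifs <;> simp
        · intro j _ hj
          rw [if_neg]
          intro h; apply hj; ext; simp; omega
        · simp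
    refine Squarefree.squarefree_of_dvd hd ?_
    have := UniqueFactorizationMonoid.squarefree_radical (a := x)
    rwa [Nat.radical_eq_prod_primeFactors] at this
  · unfold AA
    simp only [← Finset.prod_pow]
    rw [Finset.prod_comm, ← Finset.prod_mul_distrib]
    nth_rw 1 [← Nat.prod_factorization_pow_eq_self hx.ne']
    rw [Finsupp.prod, Nat.support_factorization]
    apply Finset.prod_congr rfl
    intro p _
    have e : (∏ j : Fin N, (if r p = (j : ℕ) + 1 then p else 1) ^ ((j : ℕ) + 1)) = p ^ r p := by
      by_cases h0 : r p = 0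
      · simp [h0]
      · rw [Finset.prod_eq_single (⟨r p - 1, by have := hr p; omega⟩ : Fin N)]
        · have : r p - 1 + 1 = r p := by omega
          simp [this]
        · intro j _ hj
          rw [if_neg, one_pow]
          intro h; apply hj; ext; simp; omega
        · simp
    rw [e, ← pow_mul, ← pow_add]
    congr 1
    exact (Nat.div_add_mod' _ _).symm

theorem second {N : ℕ} {a : Fin N → ℕ} (ha : Squarefree (∏ j, a j)) {u y m : ℕ} (hu : 0 < u) (hy : 0 < y)
    (hm : 0 < m) (h : (u ^ (N + 1) * AA a) * y = m ^ (N + 1)) : ∃ v, 0 < v ∧ y = v ^ (N + 1) * BB a := by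
  have pa := pos_of_sqf ha
  have hr : 0 < ∏ j, a j := Finset.prod_pos fun j _ => pa j
  have h1 : (u * ∏ j, a j) ^ (N + 1) * y = m ^ (N + 1) * BB a := by
    rw [← h, mul_pow, ← AA_mul_BB]; ring
  have hd : (u * ∏ j, a j) ∣ m := by
    rw [← Nat.factorization_le_iff_dvd (Nat.mul_pos hu hr).ne' hm.ne']
    intro p
    have := congrArg (fun x => x.factorization p) h1
    try simp only at this
    rw [Nat.factorization_mul (pow_pos (Nat.mul_pos hu hr) _).ne' hy.ne',
      Nat.factorization_mul (pow_pos hm _).ne' (BB_pos pa).ne'] at this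
    unfold BB at this
    rw [Finsupp.add_apply, Finsupp.add_apply, fac_prod_pow pa, Nat.factorization_pow, Nat.factorization_pow] at this
    simp only [Finsupp.smul_apply, smul_eq_mul] at this
    have lb := sparse_sum (sum_fac_le ha p) (fun j => N - (j : ℕ)) (fun j => by omega)
    by_contra hlt
    push Not at hlt
    have : (N + 1) * (m.factorization p + 1) ≤ (N + 1) * (u * ∏ j, a j).factorization p :=
      Nat.mul_le_mul_left _ hlt
    rw [Nat.mul_add] at this
    omega
  obtain ⟨v, rfl⟩ := hd
  refine ⟨v, Nat.pos_of_mul_pos_left hm, ?_⟩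
  rw [mul_pow (u * _) v, mul_assoc] at h1
  exact Nat.eq_of_mul_eq_mul_left (pow_pos (Nat.mul_pos hu hr) _) h1

def box (N M : ℕ) : Finset (Fin N → ℕ) := Fintype.piFinset (fun _ : Fin N => Finset.Icc 1 M)

theorem le_AA {N : ℕ} {a : Fin N → ℕ} (ha : ∀ j, 0 < a j) (j : Fin N) : a j ≤ AA a := by
  calc a j ≤ a j ^ ((j : ℕ) + 1) := Nat.le_self_pow (by omega) _
    _ ≤ _ := Nat.le_of_dvd (AA_pos ha) (Finset.dvd_prod_of_mem _ (Finset.mem_univ j))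

theorem card_eq (N M : ℕ) :
    ((Finset.Icc 1 M ×ˢ Finset.Icc 1 M).filter
      (fun p : ℕ × ℕ => ∃ m : ℕ, 0 < m ∧ p.1 * p.2 = m ^ (N + 1))).card =
    ∑ a ∈ (box N M).filter (fun a => Squarefree (∏ j, a j)),
      ((Finset.Icc 1 M).filter (fun u => u ^ (N + 1) * AA a ≤ M)).card *
      ((Finset.Icc 1 M).filter (fun u => u ^ (N + 1) * BB a ≤ M)).card := by
  simp only [← Finset.card_product]
  rw [← Finset.card_sigma]
  symm
  apply Finset.card_bij (fun (t : (_ : Fin N → ℕ) × (ℕ × ℕ)) _ => (t.2.1 ^ (N + 1) * AA t.1, t.2.2 ^ (N + 1) * BB t.1))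
  · rintro ⟨a, u, v⟩ ht
    simp only [Finset.mem_sigma, Finset.mem_filter, Finset.mem_product, Finset.mem_Icc] at ht
    obtain ⟨⟨-, ha⟩, ⟨⟨hu, -⟩, hu2⟩, ⟨hv, -⟩, hv2⟩ := ht
    have pa := pos_of_sqf ha
    simp only [Finset.mem_filter, Finset.mem_product, Finset.mem_Icc]
    refine ⟨⟨⟨Nat.mul_pos (pow_pos hu _) (AA_pos pa), hu2⟩, Nat.mul_pos (pow_pos hv _) (BB_pos pa), hv2⟩,
      u * v * ∏ j, a j, Nat.mul_pos (Nat.mul_pos hu hv) (Finset.prod_pos fun j _ => pa j), ?_⟩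
    rw [mul_pow, mul_pow, ← AA_mul_BB]; ring
  · rintro ⟨a, u, v⟩ ht ⟨b, u', v'⟩ ht' heq
    simp only [Finset.mem_sigma, Finset.mem_filter, Finset.mem_product, Finset.mem_Icc] at ht ht'
    obtain ⟨⟨-, ha⟩, ⟨⟨hu, -⟩, hu2⟩, ⟨hv, -⟩, hv2⟩ := ht
    obtain ⟨⟨-, hb⟩, ⟨⟨hu', -⟩, hu2'⟩, ⟨hv', -⟩, hv2'⟩ := ht'
    simp only [Prod.mk.injEq] at heq
    obtain ⟨rfl, rfl⟩ := decomp_inj ha hb hu hu' heq.1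
    have := Nat.eq_of_mul_eq_mul_right (BB_pos (pos_of_sqf ha)) heq.2
    have := Nat.pow_left_injective (Nat.succ_ne_zero N) this
    try simp only at this
    rw [this]
  · rintro ⟨x, y⟩ hxy
    simp only [Finset.mem_filter, Finset.mem_product, Finset.mem_Icc] at hxy
    obtain ⟨⟨⟨hx, hxM⟩, hy, hyM⟩, m, hm, hmk⟩ := hxy
    obtain ⟨u, a, hu, ha, rfl⟩ := decomp_exists N hx
    obtain ⟨v, hv, rfl⟩ := second ha hu hy hm hmk
    have pa := pos_of_sqf ha
    have hle : ∀ (w A : ℕ), 0 < w → 0 < A → w ^ (N + 1) * A ≤ M → w ≤ M := by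
      intro w A hw hA hh
      calc w ≤ w ^ (N + 1) := Nat.le_self_pow (by omega) _
        _ ≤ w ^ (N + 1) * A := Nat.le_mul_of_pos_right _ hA
        _ ≤ M := hh
    refine ⟨⟨a, u, v⟩, ?_, rfl⟩
    simp only [Finset.mem_sigma, Finset.mem_filter, Finset.mem_product, Finset.mem_Icc, box, Fintype.mem_piFinset]
    refine ⟨⟨fun j => ⟨pa j, (le_AA pa j).trans ?_⟩, ha⟩, ⟨⟨hu, hle u _ hu (AA_pos pa) hxM⟩, hxM⟩, ⟨hv, hle v _ hv (BB_pos pa) hyM⟩, hyM⟩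
    exact (Nat.le_mul_of_pos_left _ (pow_pos hu _)).trans hxM

theorem card_floor {N A : ℕ} (hA : 0 < A) {H : ℝ} (hH : 0 ≤ H) :
    ((Finset.Icc 1 ⌊H⌋₊).filter (fun u => u ^ (N + 1) * A ≤ ⌊H⌋₊)).card =
      ⌊(H / A) ^ (1 / ((N : ℝ) + 1))⌋₊ := by
  have hA' : (0 : ℝ) < A := by exact_mod_cast hA
  have : (Finset.Icc 1 ⌊H⌋₊).filter (fun u => u ^ (N + 1) * A ≤ ⌊H⌋₊) =
      Finset.Icc 1 ⌊(H / A) ^ (1 / ((N : ℝ) + 1))⌋₊ := by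
    ext u
    simp only [Finset.mem_filter, Finset.mem_Icc]
    have e : u ≤ ⌊(H / A) ^ (1 / ((N : ℝ) + 1))⌋₊ ↔ u ^ (N + 1) * A ≤ ⌊H⌋₊ := by
      rw [Nat.le_floor_iff (by positivity), Nat.le_floor_iff hH]
      push_cast
      rw [← le_div_iff₀ hA', one_div, Real.le_rpow_inv_iff_of_pos (by positivity) (by positivity) (by positivity)]
      rw [← Real.rpow_natCast]
      push_cast
      rfl
    rw [e]
    constructor
    · rintro ⟨⟨h1, _⟩, h2⟩; exact ⟨h1, h2⟩
    · rintro ⟨h1, h2⟩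
      refine ⟨⟨h1, ?_⟩, h2⟩
      calc u ≤ u ^ (N + 1) := Nat.le_self_pow (by omega) _
        _ ≤ u ^ (N + 1) * A := Nat.le_mul_of_pos_right _ hA
        _ ≤ _ := h2
  rw [this]; simp

end SkAux

namespace SkAux

theorem powsum {θ : ℝ} (h0 : 0 ≤ θ) (h1 : θ ≤ 1 / 2) (m : ℕ) :
    ∑ b ∈ Finset.Icc 1 m, ((b : ℝ) ^ θ)⁻¹ ≤ 2 * (m : ℝ) ^ (1 - θ) := by
  induction m with
  | zero => simp; positivity
  | succ m ih =>
    rw [Finset.sum_Icc_succ_top (by omega)]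
    set b : ℝ := ((m + 1 : ℕ) : ℝ) with hb
    have hb0 : 0 < b := by rw [hb]; positivity
    have hb1 : 1 ≤ b := by rw [hb]; push_cast; linarith [(Nat.cast_nonneg m : (0 : ℝ) ≤ m)]
    have hm : (m : ℝ) = b * (1 + -(1 / b)) := by
      rw [hb]; push_cast; field_simp; ring
    have hi : 1 / b ≤ 1 := by rw [div_le_one hb0]; exact hb1
    have hi0 : 0 ≤ 1 / b := by positivity
    have key := rpow_one_add_le_one_add_mul_self (s := -(1 / b)) (by linarith) (p := 1 - θ) (by linarith) (by linarith)
    have hm2 : (m : ℝ) ^ (1 - θ) ≤ b ^ (1 - θ) - (b ^ θ)⁻¹ / 2 := by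
      rw [hm, Real.mul_rpow hb0.le (by linarith)]
      have hbp : 0 < b ^ (1 - θ) := by positivity
      have e : (b ^ θ)⁻¹ = b ^ (1 - θ) * (1 / b) := by
        rw [Real.rpow_sub hb0, Real.rpow_one]; field_simp
      rw [e]
      have := mul_le_mul_of_nonneg_left key hbp.le
      nlinarith [mul_nonneg hbp.le hi0]
    linarith

theorem AA_cons {n : ℕ} (b : ℕ) (a : Fin n → ℕ) :
    AA (Fin.cons b a : Fin (n + 1) → ℕ) = b * ∏ j : Fin n, a j ^ ((j : ℕ) + 2) := by
  unfold AA
  rw [Fin.prod_univ_succ]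
  simp

theorem BB_cons {n : ℕ} (b : ℕ) (a : Fin n → ℕ) :
    BB (Fin.cons b a : Fin (n + 1) → ℕ) = b ^ (n + 1) * BB a := by
  unfold BB
  rw [Fin.prod_univ_succ]
  simp

theorem AB_tail {n : ℕ} (a : Fin n → ℕ) :
    (∏ j : Fin n, a j ^ ((j : ℕ) + 2)) * BB a = (∏ j, a j) ^ (n + 2) := by
  unfold BB
  rw [← Finset.prod_mul_distrib, ← Finset.prod_pow]
  apply Finset.prod_congr rfl
  intro j _
  rw [← pow_add]
  congr 1
  have := j.2
  omega

theorem box_sum_succ (n M : ℕ) (f : (Fin (n + 1) → ℕ) → ℝ) :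
    ∑ a ∈ box (n + 1) M, f a = ∑ a ∈ box n M, ∑ b ∈ Finset.Icc 1 M, f (Fin.cons b a) := by
  rw [← Finset.sum_product']
  symm
  apply Finset.sum_bij (fun (t : (Fin n → ℕ) × ℕ) _ => (Fin.cons t.2 t.1 : Fin (n + 1) → ℕ))
  · rintro ⟨a, b⟩ h
    simp only [Finset.mem_product, box, Fintype.mem_piFinset] at h ⊢
    intro j
    refine Fin.cases ?_ ?_ j
    · exact h.2
    · intro i; exact h.1 i
  · rintro ⟨a, b⟩ _ ⟨a', b'⟩ _ h
    simp only [Fin.cons_inj] at h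
    rw [h.1, h.2]
  · intro a h
    simp only [box, Fintype.mem_piFinset] at h
    refine ⟨(Fin.tail a, a 0), ?_, Fin.cons_self_tail a⟩
    simp only [Finset.mem_product, box, Fintype.mem_piFinset]
    exact ⟨fun j => h j.succ, h 0⟩
  · intros; rfl

theorem alpha_inner (n M A B : ℕ) (hA : 0 < A) (hB : 0 < B) {H : ℝ} (hH : 0 < H) :
    ∑ b ∈ Finset.Icc 1 M, (if ((b ^ (n + 1) * B : ℕ) : ℝ) ≤ H then
      (H / ((b * A : ℕ) : ℝ)) ^ (1 / ((n : ℝ) + 2)) else 0) ≤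
    2 * ((H / A) ^ (1 / ((n : ℝ) + 2)) * (H / B) ^ (1 / ((n : ℝ) + 2))) := by
  set θ := 1 / ((n : ℝ) + 2) with hθ
  have hn : (0 : ℝ) ≤ n := Nat.cast_nonneg n
  have h0 : 0 ≤ θ := by positivity
  have h1 : θ ≤ 1 / 2 := by
    rw [hθ]; apply one_div_le_one_div_of_le <;> linarith
  have hA' : (0 : ℝ) < A := by exact_mod_cast hA
  have hB' : (0 : ℝ) < B := by exact_mod_cast hB
  set X := (H / B) ^ (1 / ((n : ℝ) + 1)) with hX
  have hX0 : 0 ≤ X := by positivity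
  rw [← Finset.sum_filter]
  have hsub : (Finset.Icc 1 M).filter (fun b : ℕ => ((b ^ (n + 1) * B : ℕ) : ℝ) ≤ H) ⊆ Finset.Icc 1 ⌊X⌋₊ := by
    intro b hb
    simp only [Finset.mem_filter, Finset.mem_Icc] at hb ⊢
    refine ⟨hb.1.1, ?_⟩
    rw [Nat.le_floor_iff hX0]
    have := hb.2
    push_cast at this
    rw [← le_div_iff₀ hB'] at this
    rw [hX, one_div, Real.le_rpow_inv_iff_of_pos (by positivity) (by positivity) (by positivity)]
    refine le_trans (le_of_eq ?_) this
    rw [← Real.rpow_natCast]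
    push_cast; rfl
  refine (Finset.sum_le_sum_of_subset_of_nonneg hsub (fun b _ _ => by positivity)).trans ?_
  have e : ∀ b ∈ Finset.Icc 1 ⌊X⌋₊, (H / ((b * A : ℕ) : ℝ)) ^ θ = (H / A) ^ θ * ((b : ℝ) ^ θ)⁻¹ := by
    intro b hb
    rw [← Real.inv_rpow (by positivity), ← Real.mul_rpow (by positivity) (by positivity)]
    congr 1
    push_cast
    rw [mul_comm, ← div_div]; rfl
  rw [Finset.sum_congr rfl e, ← Finset.mul_sum]
  have hXθ : X ^ (1 - θ) = (H / B) ^ θ := by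
    rw [hX, ← Real.rpow_mul (by positivity)]
    congr 1
    rw [hθ]; field_simp; ring
  have h2 : (⌊X⌋₊ : ℝ) ^ (1 - θ) ≤ X ^ (1 - θ) :=
    Real.rpow_le_rpow (by positivity) (Nat.floor_le hX0) (by linarith)
  have h3 := powsum h0 h1 ⌊X⌋₊
  have h4 : 0 ≤ (H / A) ^ θ := by positivity
  rw [hXθ] at h2
  nlinarith [mul_le_mul_of_nonneg_left (h3.trans (mul_le_mul_of_nonneg_left h2 (by norm_num : (0:ℝ) ≤ 2))) h4]

theorem alpha_sum (n M : ℕ) {H : ℝ} (hH : 0 < H) :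
    ∑ a ∈ box (n + 1) M, (if (BB a : ℝ) ≤ H then (H / (AA a : ℝ)) ^ (1 / ((n : ℝ) + 2)) else 0) ≤
      2 * H ^ (2 / ((n : ℝ) + 2)) * (∑ b ∈ Finset.Icc 1 M, 1 / (b : ℝ)) ^ n := by
  rw [box_sum_succ, Finset.sum_pow', Finset.mul_sum]
  apply Finset.sum_le_sum
  intro a ha
  have pa : ∀ j, 0 < a j := by
    intro j
    simp only [box, Fintype.mem_piFinset, Finset.mem_Icc] at ha
    exact (ha j).1
  simp only [AA_cons, BB_cons]
  have hA : 0 < ∏ j : Fin n, a j ^ ((j : ℕ) + 2) := Finset.prod_pos fun j _ => pow_pos (pa j) _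
  have hB := BB_pos pa
  refine (alpha_inner n M _ _ hA hB hH).trans (le_of_eq ?_)
  rw [mul_assoc]
  congr 1
  rw [← Real.mul_rpow (by positivity) (by positivity)]
  have e : H / ((∏ j : Fin n, a j ^ ((j : ℕ) + 2) : ℕ) : ℝ) * (H / (BB a : ℝ)) =
      H ^ 2 * ((∏ j, (1 / (a j : ℝ))) ^ (n + 2)) := by
    rw [div_mul_div_comm, ← Nat.cast_mul, AB_tail]
    push_cast
    rw [Finset.prod_div_distrib, Finset.prod_const_one, div_pow, one_pow]
    ring
  have hp : 0 ≤ ∏ j, (1 / (a j : ℝ)) := Finset.prod_nonneg fun j _ => by positivity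
  rw [e, Real.mul_rpow (by positivity) (by positivity), ← Real.rpow_natCast, ← Real.rpow_mul hH.le,
    ← Real.rpow_natCast, ← Real.rpow_mul hp]
  congr 1
  · congr 1; push_cast; ring
  · convert Real.rpow_one _ using 2
    push_cast
    field_simp

theorem AA_rev {N : ℕ} (a : Fin N → ℕ) : AA (a ∘ Fin.rev) = BB a := by
  unfold AA BB
  rw [← Equiv.prod_comp Fin.revPerm]
  apply Finset.prod_congr rfl
  intro j _
  simp only [Fin.revPerm_apply, Function.comp, Fin.rev_rev, Fin.val_rev]
  congr 1
  have := j.2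
  omega

theorem BB_rev {N : ℕ} (a : Fin N → ℕ) : BB (a ∘ Fin.rev) = AA a := by
  rw [← AA_rev]
  congr 1
  ext j; simp

theorem beta_sum (n M : ℕ) {H : ℝ} (hH : 0 < H) :
    ∑ a ∈ box (n + 1) M, (if (AA a : ℝ) ≤ H then (H / (BB a : ℝ)) ^ (1 / ((n : ℝ) + 2)) else 0) ≤
      2 * H ^ (2 / ((n : ℝ) + 2)) * (∑ b ∈ Finset.Icc 1 M, 1 / (b : ℝ)) ^ n := by
  refine le_trans (le_of_eq ?_) (alpha_sum n M hH)
  apply Finset.sum_bij (fun a _ => a ∘ Fin.rev)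
  · intro a ha
    simp only [box, Fintype.mem_piFinset] at ha ⊢
    intro j; exact ha _
  · intro a _ b _ h
    ext j
    have := congrFun h (Fin.rev j)
    simpa using this
  · intro a ha
    refine ⟨a ∘ Fin.rev, ?_, by ext j; simp⟩
    simp only [box, Fintype.mem_piFinset] at ha ⊢
    intro j; exact ha _
  · intro a _
    rw [AA_rev, BB_rev]

theorem harm_le {H : ℝ} (hH : 1 ≤ H) : ∑ b ∈ Finset.Icc 1 ⌊H⌋₊, 1 / (b : ℝ) ≤ 1 + Real.log H := by
  have := harmonic_le_one_add_log ⌊H⌋₊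
  rw [harmonic_eq_sum_Icc] at this
  push_cast at this
  simp only [one_div]
  refine this.trans ?_
  have : 0 < ⌊H⌋₊ := Nat.floor_pos.2 hH
  gcongr
  exact Nat.floor_le (by linarith)

end SkAux

namespace SkAux

theorem Adm_iff {n : ℕ} {a : Fin (n + 1) → ℕ} (pa : ∀ j, 0 < a j) {H : ℝ} (hH : 0 < H) :
    Adm (n + 2) (fun j : Fin (n + 1) => (j : ℕ) + 1) a (Real.log H) (Real.log H) ↔
      (AA a : ℝ) ≤ H ∧ (BB a : ℝ) ≤ H := by
  have pA : (0 : ℝ) < AA a := by exact_mod_cast AA_pos pa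
  have pB : (0 : ℝ) < BB a := by exact_mod_cast BB_pos pa
  have eA : ∑ j : Fin (n + 1), (((j : ℕ) + 1 : ℕ) : ℝ) * Real.log (a j) = Real.log (AA a) := by
    unfold AA
    rw [Nat.cast_prod, Real.log_prod (fun j _ => by have := pa j; positivity)]
    apply Finset.sum_congr rfl
    intro j _
    rw [Nat.cast_pow, Real.log_pow]
  have eB : ∑ j : Fin (n + 1), (((n + 2 : ℕ) : ℝ) - (((j : ℕ) + 1 : ℕ) : ℝ)) * Real.log (a j) = Real.log (BB a) := by
    unfold BB
    rw [Nat.cast_prod, Real.log_prod (fun j _ => by have := pa j; positivity)]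
    apply Finset.sum_congr rfl
    intro j _
    rw [Nat.cast_pow, Real.log_pow, Nat.cast_sub (by have := j.2; omega)]
    push_cast
    ring
  unfold Adm
  rw [eA, eB, Real.log_le_log_iff pA hH, Real.log_le_log_iff pB hH]
  exact ⟨fun h => h.2, fun h => ⟨pa, h⟩⟩

theorem floor_prod {α β : ℝ} (hα : 0 ≤ α) (hβ : 0 ≤ β) :
    |(⌊α⌋₊ : ℝ) * ⌊β⌋₊ - α * β| ≤ α + β := by
  have h1 := Nat.floor_le hα
  have h2 := Nat.floor_le hβ
  have h3 := Nat.lt_floor_add_one α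
  have h4 := Nat.lt_floor_add_one β
  have h5 : (0 : ℝ) ≤ ⌊α⌋₊ := by positivity
  have h6 : (0 : ℝ) ≤ ⌊β⌋₊ := by positivity
  rw [abs_le]
  constructor <;> nlinarith

theorem good_c (n : ℕ) : Good (n + 2) (fun j : Fin (n + 1) => (j : ℕ) + 1) := by
  intro j
  have := j.2
  constructor <;> simp <;> omega

theorem count_est (n : ℕ) {H : ℝ} (hH : 1 ≤ H) :
    |(((Finset.Icc 1 ⌊H⌋₊ ×ˢ Finset.Icc 1 ⌊H⌋₊).filter
      (fun p : ℕ × ℕ => ∃ m : ℕ, 0 < m ∧ p.1 * p.2 = m ^ (n + 2))).card : ℝ) -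
      H ^ (2 / ((n : ℝ) + 2)) * R (n + 2) (fun j : Fin (n + 1) => (j : ℕ) + 1)
        (fun a => if Squarefree (∏ j, a j) then 1 else 0) (Real.log H) (Real.log H)| ≤
      4 * H ^ (2 / ((n : ℝ) + 2)) * (1 + Real.log H) ^ n := by
  have hH0 : 0 < H := by linarith
  rw [card_eq (n + 1) ⌊H⌋₊, R_eq_sum (good_c n) _ _ _ (N := ⌊H⌋₊) (by rw [Real.exp_log hH0])]
  push_cast
  rw [Finset.sum_filter, Finset.mul_sum]
  change |∑ a ∈ box (n + 1) ⌊H⌋₊, _ - ∑ a ∈ box (n + 1) ⌊H⌋₊, _| ≤ _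
  rw [← Finset.sum_sub_distrib]
  refine (Finset.abs_sum_le_sum_abs _ _).trans ?_
  have hsum := add_le_add (alpha_sum n ⌊H⌋₊ hH0) (beta_sum n ⌊H⌋₊ hH0)
  have hh : (∑ b ∈ Finset.Icc 1 ⌊H⌋₊, 1 / (b : ℝ)) ^ n ≤ (1 + Real.log H) ^ n := by
    apply pow_le_pow_left₀ (Finset.sum_nonneg fun b _ => by positivity) (harm_le hH)
  have hb : 2 * H ^ (2 / ((n : ℝ) + 2)) * (∑ b ∈ Finset.Icc 1 ⌊H⌋₊, 1 / (b : ℝ)) ^ n +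
      2 * H ^ (2 / ((n : ℝ) + 2)) * (∑ b ∈ Finset.Icc 1 ⌊H⌋₊, 1 / (b : ℝ)) ^ n ≤
      4 * H ^ (2 / ((n : ℝ) + 2)) * (1 + Real.log H) ^ n := by
    have := mul_le_mul_of_nonneg_left hh (show 0 ≤ 4 * H ^ (2 / ((n : ℝ) + 2)) by positivity)
    linarith
  refine le_trans ?_ (hsum.trans hb)
  rw [← Finset.sum_add_distrib]
  apply Finset.sum_le_sum
  intro a ha
  have pa : ∀ j, 0 < a j := by
    intro j
    simp only [box, Fintype.mem_piFinset, Finset.mem_Icc] at ha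
    exact (ha j).1
  have pA := AA_pos pa
  have pB := BB_pos pa
  have pA' : (0 : ℝ) < AA a := by exact_mod_cast pA
  have pB' : (0 : ℝ) < BB a := by exact_mod_cast pB
  rw [card_floor pA hH0.le, card_floor pB hH0.le]
  have hθ : 1 / (((n + 1 : ℕ) : ℝ) + 1) = 1 / ((n : ℝ) + 2) := by push_cast; ring
  rw [hθ]
  set θ := 1 / ((n : ℝ) + 2) with hθd
  have hθ0 : 0 < θ := by positivity
  unfold tm
  rw [Adm_iff pa hH0]
  have hsmall : ∀ A : ℝ, 0 < A → ¬ A ≤ H → ⌊(H / A) ^ θ⌋₊ = 0 := by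
    intro A hA hAH
    rw [Nat.floor_eq_zero]
    apply Real.rpow_lt_one (by positivity) _ hθ0
    rw [div_lt_one hA]; linarith
  by_cases h1 : (AA a : ℝ) ≤ H
  swap
  · rw [hsmall _ pA' h1]
    simp only [h1, false_and, if_false, Nat.cast_zero, zero_mul, ite_self, mul_zero, sub_zero, abs_zero, add_zero]
    positivity
  by_cases h2 : (BB a : ℝ) ≤ H
  swap
  · rw [hsmall _ pB' h2]
    simp only [h2, and_false, if_false, Nat.cast_zero, mul_zero, ite_self, sub_zero, abs_zero, zero_add]
    positivity
  simp only [h1, h2, and_self, if_true]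
  by_cases h3 : Squarefree (∏ j, a j)
  swap
  · simp only [h3, if_false, zero_mul, mul_zero, sub_zero, abs_zero]
    positivity
  simp only [h3, if_true, one_mul]
  have hp : 0 ≤ ∏ j, (1 / (a j : ℝ)) := Finset.prod_nonneg fun j _ => by positivity
  have e : H ^ (2 / ((n : ℝ) + 2)) * ∏ j, (1 / (a j : ℝ)) = (H / AA a) ^ θ * (H / BB a) ^ θ := by
    rw [← Real.mul_rpow (by positivity) (by positivity)]
    have e : H / (AA a : ℝ) * (H / (BB a : ℝ)) =
        H ^ 2 * ((∏ j, (1 / (a j : ℝ))) ^ (n + 2)) := by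
      rw [div_mul_div_comm, ← Nat.cast_mul, AA_mul_BB]
      push_cast
      rw [Finset.prod_div_distrib, Finset.prod_const_one, div_pow, one_pow]
      ring
    rw [e, Real.mul_rpow (by positivity) (by positivity), ← Real.rpow_natCast, ← Real.rpow_mul hH0.le,
      ← Real.rpow_natCast, ← Real.rpow_mul hp]
    congr 1
    · congr 1; rw [hθd]; push_cast; ring
    · symm
      convert Real.rpow_one _ using 2
      rw [hθd]
      push_cast
      field_simp
  rw [e]
  exact floor_prod (by positivity) (by positivity)

theorem main (n : ℕ) :
    ∃ Pk : ℝ,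
      HasProd (fun p : Nat.Primes => qp (n + 1) p) Pk ∧
      ∃ C : ℝ, ∀ H : ℝ, Real.exp 1 ≤ H →
        |(((Finset.Icc 1 ⌊H⌋₊ ×ˢ Finset.Icc 1 ⌊H⌋₊).filter
          (fun p : ℕ × ℕ => ∃ m : ℕ, 0 < m ∧ p.1 * p.2 = m ^ (n + 2))).card : ℝ) -
          Pk * V (n + 2) (n + 1) (fun j : Fin (n + 1) => (j : ℕ) + 1) (Real.log H) (Real.log H) *
            H ^ (2 / ((n : ℝ) + 2))| ≤
          C * (H ^ (2 / ((n : ℝ) + 2)) * Real.log H ^ n) := by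
  obtain ⟨P, hP⟩ := qp_hasProd (n + 1)
  obtain ⟨C, hC⟩ := R_sqf (good_c n) hP
  refine ⟨P, hP, (4 + |C|) * 2 ^ n, fun H hH => ?_⟩
  have hH0 : 0 < H := (Real.exp_pos 1).trans_le hH
  have hl : 1 ≤ Real.log H := by rwa [Real.le_log_iff_exp_le hH0]
  have hH1 : 1 ≤ H := by
    have := Real.add_one_le_exp (1 : ℝ); linarith
  have h1 := count_est n hH1
  have h2 := hC (Real.log H) (by linarith)
  set W := H ^ (2 / ((n : ℝ) + 2))
  have hW : 0 ≤ W := by positivity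
  set S : ℝ := (((Finset.Icc 1 ⌊H⌋₊ ×ˢ Finset.Icc 1 ⌊H⌋₊).filter
          (fun p : ℕ × ℕ => ∃ m : ℕ, 0 < m ∧ p.1 * p.2 = m ^ (n + 2))).card : ℝ)
  set T := R (n + 2) (fun j : Fin (n + 1) => (j : ℕ) + 1)
        (fun a => if Squarefree (∏ j, a j) then 1 else 0) (Real.log H) (Real.log H)
  set v := V (n + 2) (n + 1) (fun j : Fin (n + 1) => (j : ℕ) + 1) (Real.log H) (Real.log H)
  have hpow : (1 + Real.log H) ^ n ≤ 2 ^ n * Real.log H ^ n := by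
    rw [← mul_pow]; apply pow_le_pow_left₀ <;> linarith
  have h0 : 0 ≤ (1 + Real.log H) ^ n := by positivity
  calc |S - P * v * W| = |(S - W * T) + W * (T - P * v)| := by congr 1; ring
    _ ≤ 4 * W * (1 + Real.log H) ^ n + W * (|C| * (1 + Real.log H) ^ n) := by
        refine (abs_add_le _ _).trans (add_le_add h1 ?_)
        rw [abs_mul, abs_of_nonneg hW]
        apply mul_le_mul_of_nonneg_left _ hW
        exact h2.trans (mul_le_mul_of_nonneg_right (le_abs_self C) h0)
    _ = (4 + |C|) * W * (1 + Real.log H) ^ n := by ring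
    _ ≤ (4 + |C|) * W * (2 ^ n * Real.log H ^ n) := by
        apply mul_le_mul_of_nonneg_left hpow; positivity
    _ = _ := by ring

end SkAux

theorem Sk_asymptotic (k : ℕ) (hk : 2 ≤ k) :
    ∃ Pk : ℝ,
      HasProd (fun p : Nat.Primes =>
        (1 - 1 / ((p : ℕ) : ℝ)) ^ (k - 1) * (1 + ((k : ℝ) - 1) / ((p : ℕ) : ℝ))) Pk ∧
      (fun H : ℝ =>
          (((Finset.Icc 1 ⌊H⌋₊ ×ˢ Finset.Icc 1 ⌊H⌋₊).filter
              (fun p : ℕ × ℕ => ∃ m : ℕ, 0 < m ∧ p.1 * p.2 = m ^ k)).card : ℝ)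
            - (Pk / (Nat.factorial (k - 1) : ℝ) ^ 2) *
                (1 + (1 / (k : ℝ) ^ (k - 2)) *
                  ∑ m ∈ Finset.Ioc (k / 2) (k - 1),
                    (-1 : ℝ) ^ (k - m) * (2 * (m : ℝ) - k) ^ (k - 1) *
                      ((k - 1).choose m) / ((k : ℝ) - m)) *
              H ^ (2 / (k : ℝ)) * (Real.log H) ^ (k - 1))
        =O[atTop] fun H : ℝ => H ^ (2 / (k : ℝ)) * (Real.log H) ^ (k - 2) := by
  obtain ⟨n, rfl⟩ : ∃ n, k = n + 2 := ⟨k - 2, by omega⟩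
  obtain ⟨P, hP, C, hC⟩ := SkAux.main n
  refine ⟨P, ?_, ?_⟩
  · convert hP using 2 with p
    unfold SkAux.qp
    push_cast
    rw [show (n : ℝ) + 2 - 1 = n + 1 by ring]
  · apply Asymptotics.IsBigO.of_bound C
    filter_upwards [eventually_ge_atTop (Real.exp 1)] with H hH
    have h := hC H hH
    have hH0 : 0 < H := (Real.exp_pos 1).trans_le hH
    have hl : 1 ≤ Real.log H := by rwa [Real.le_log_iff_exp_le hH0]
    have hV := SkAux.V_diag (n + 2) hk (Real.log H) (by linarith)
    change SkAux.V (n + 2) (n + 1) (fun j : Fin (n + 1) => (j : ℕ) + 1) (Real.log H) (Real.log H) = _ at hV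
    rw [hV] at h
    have e : ((n + 2 : ℕ) : ℝ) = (n : ℝ) + 2 := by push_cast; rfl
    rw [Real.norm_eq_abs, Real.norm_eq_abs,
      abs_of_nonneg (show (0 : ℝ) ≤ H ^ (2 / ((n + 2 : ℕ) : ℝ)) * Real.log H ^ (n + 2 - 2) by positivity)]
    rw [← e] at h
    refine le_trans (le_of_eq ?_) h
    congr 2
    ring
end
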